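/- arXiv:1207.4761 — 7 statements merged into one kernel-verified Lean document; each statement's English description precedes it below -/
import Mathlib

section
/- Let J ⊆ ℝ, let d ≥ 1, K > 0 and 0 < ε < min(1, d), and let g, g̃ : J → ℝ be twice differentiable functions such that |g'(θ)| ≥ d and |g''(θ)| ≤ K |g'(θ)|² for all θ ∈ J, and such that |g(θ) − g̃(θ)| < ε, |g'(θ) − g̃'(θ)| < ε and |g''(θ) − g̃''(θ)| < ε for all θ ∈ J. Then g̃ satisfies the Rényi condition with constant K̃ = (d − ε)^{−2} ε + (1 − ε)^{−2} K, i.e. |g̃''(θ)| ≤ K̃ |g̃'(θ)|² for all θ ∈ J. -/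
/-!
The second derivative of the perturbed map is at most `ε + K |g'|²`. The triangle inequality
`|g̃'| ≥ |g'| - ε` gives two lower bounds: `|g̃'| ≥ d - ε`, so that `ε` is absorbed into
`(d - ε)⁻² ε |g̃'|²`, and, because `|g'| ≥ 1`, also `|g̃'| ≥ (1 - ε) |g'|`, so that `K |g'|²` is
absorbed into `(1 - ε)⁻² K |g̃'|²`.
-/

/-- **Lemma (openness of the Rényi condition).** If `g` satisfies `|g'| ≥ d` and the
Rényi condition `|g''| ≤ K |g'|²` on `J`, and `g̃` is `ε`-close to `g` together with
its first two derivatives on `J` (with `0 < ε < min 1 d`), then `g̃` satisfies the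
Rényi condition on `J` with constant `K̃ = (d − ε)⁻² ε + (1 − ε)⁻² K`. -/
theorem renyi_condition_open
    (J : Set ℝ) (d K ε : ℝ) (hd : 1 ≤ d) (hK : 0 < K)
    (hε0 : 0 < ε) (hε : ε < min 1 d)
    (g g' g'' gt gt' gt'' : ℝ → ℝ)
    (hg1 : ∀ θ ∈ J, HasDerivAt g (g' θ) θ)
    (hg2 : ∀ θ ∈ J, HasDerivAt g' (g'' θ) θ)
    (hgt1 : ∀ θ ∈ J, HasDerivAt gt (gt' θ) θ)
    (hgt2 : ∀ θ ∈ J, HasDerivAt gt' (gt'' θ) θ)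
    (hexp : ∀ θ ∈ J, d ≤ |g' θ|)
    (hren : ∀ θ ∈ J, |g'' θ| ≤ K * |g' θ| ^ 2)
    (hc0 : ∀ θ ∈ J, |g θ - gt θ| < ε)
    (hc1 : ∀ θ ∈ J, |g' θ - gt' θ| < ε)
    (hc2 : ∀ θ ∈ J, |g'' θ - gt'' θ| < ε) :
    ∀ θ ∈ J, |gt'' θ| ≤ ((d - ε)⁻¹ ^ 2 * ε + (1 - ε)⁻¹ ^ 2 * K) * |gt' θ| ^ 2 := by
  intro θ hθ
  obtain ⟨hε1, hεd⟩ := lt_min_iff.mp hε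
  have h1 : |g' θ| - ε ≤ |gt' θ| := by
    linarith [abs_sub_abs_le_abs_sub (g' θ) (gt' θ), hc1 θ hθ]
  have h2 : |gt'' θ| ≤ |g'' θ| + ε := by
    linarith [abs_sub_abs_le_abs_sub (gt'' θ) (g'' θ), abs_sub_comm (g'' θ) (gt'' θ), hc2 θ hθ]
  have ha : 1 ≤ (d - ε)⁻¹ * |gt' θ| := by
    rw [inv_mul_eq_div, one_le_div (by linarith)]
    linarith [hexp θ hθ]
  -- Since `1 ≤ d ≤ |g'|`, the additive error `ε` is at most the relative error `ε |g'|`.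
  have hb : |g' θ| ≤ (1 - ε)⁻¹ * |gt' θ| := by
    rw [inv_mul_eq_div, le_div_iff₀ (by linarith)]
    nlinarith [hexp θ hθ]
  calc |gt'' θ| ≤ ε * 1 ^ 2 + K * |g' θ| ^ 2 := by linarith [hren θ hθ]
    _ ≤ ε * ((d - ε)⁻¹ * |gt' θ|) ^ 2 + K * ((1 - ε)⁻¹ * |gt' θ|) ^ 2 := by gcongr
    _ = ((d - ε)⁻¹ ^ 2 * ε + (1 - ε)⁻¹ ^ 2 * K) * |gt' θ| ^ 2 := by ring
end

section
/- Let d > 1, K > 0 and n ≥ 1. Let ω ⊆ ℝ be an interval and g a real function such that for each 0 ≤ j < n, gʲ(ω) is an interval on which g is C², monotone, and satisfies |g'| ≥ d and |g''| ≤ K |g'|², and assume gⁿ(ω) ⊆ (0,1]. Then for all θ₁, θ₂ ∈ ω, exp(−dK/(d−1)) ≤ |(gⁿ)'(θ₁)| / |(gⁿ)'(θ₂)| ≤ exp(dK/(d−1)), where (gⁿ)'(θ) = ∏_{j=0}^{n−1} g'(gʲ(θ)). -/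
open Set

/-!
Write `x j`, `y j` for the orbits of two points and `D j = |x j - y j|`. Cauchy's mean value theorem
applied to `log |g'|` against `g` gives a point `c` between `x j` and `y j` at which the quotient of
increments is `g''(c) / g'(c)²`; the Rényi condition therefore bounds the change of `log |g'|` by
`K * D (j + 1)` (`abs_log_deriv_sub_le`). Expansion gives `d * D j ≤ D (j + 1)`
(`mul_abs_sub_le_of_expanding`), so `D 1 + ⋯ + D m ≤ d / (d - 1) * D m` by induction on `m`. As
`gⁿ(ω) ⊆ (0,1]`, `D n ≤ 1`, and the distortion is at most `exp (d * K / (d - 1))`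
(`prod_abs_deriv_le`).
-/

theorem mul_abs_sub_le_of_expanding {d : ℝ} {S : Set ℝ} (hS : S.OrdConnected)
    {g g' : ℝ → ℝ} (hg : ∀ θ ∈ S, HasDerivAt g (g' θ) θ) (hexp : ∀ θ ∈ S, d ≤ |g' θ|)
    {x y : ℝ} (hx : x ∈ S) (hy : y ∈ S) : d * |x - y| ≤ |g x - g y| := by
  wlog hxy : x < y generalizing x y
  · rcases (not_lt.mp hxy).eq_or_lt with h | h
    · simp [h]
    · rw [abs_sub_comm x, abs_sub_comm (g x)]
      exact this hy hx h
  have hsub : Icc x y ⊆ S := hS.out hx hy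
  obtain ⟨c, hc, h⟩ := exists_hasDerivAt_eq_slope g g' hxy
    (fun t ht => (hg t (hsub ht)).continuousAt.continuousWithinAt)
    (fun t ht => hg t (hsub (Ioo_subset_Icc_self ht)))
  have hpos : 0 < y - x := sub_pos.mpr hxy
  have hmul : g y - g x = g' c * (y - x) := by rw [h]; field_simp
  rw [abs_sub_comm x, abs_sub_comm (g x), hmul, abs_mul]
  exact mul_le_mul_of_nonneg_right (hexp c (hsub (Ioo_subset_Icc_self hc))) (abs_nonneg _)

/-- The Rényi condition controls the variation of `log |g'|` by that of `g`. The absolute value is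
absent because `Real.log` is even. -/
theorem abs_log_deriv_sub_le {K : ℝ} {S : Set ℝ} (hS : S.OrdConnected) {g g' g'' : ℝ → ℝ}
    (hderiv : ∀ θ ∈ S, HasDerivAt g (g' θ) θ ∧ HasDerivAt g' (g'' θ) θ)
    (hne : ∀ θ ∈ S, g' θ ≠ 0) (hren : ∀ θ ∈ S, |g'' θ| ≤ K * |g' θ| ^ 2)
    {x y : ℝ} (hx : x ∈ S) (hy : y ∈ S) :
    |Real.log (g' x) - Real.log (g' y)| ≤ K * |g x - g y| := by
  wlog hxy : x < y generalizing x y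
  · rcases (not_lt.mp hxy).eq_or_lt with h | h
    · simp [h]
    · rw [abs_sub_comm (Real.log _), abs_sub_comm (g x)]
      exact this hy hx h
  have hsub : Icc x y ⊆ S := hS.out hx hy
  have hlog : ∀ t ∈ Icc x y, HasDerivAt (fun s => Real.log (g' s)) (g'' t / g' t) t :=
    fun t ht => (hderiv t (hsub ht)).2.log (hne t (hsub ht))
  obtain ⟨c, hc, h⟩ := exists_ratio_hasDerivAt_eq_ratio_slope
    (fun s => Real.log (g' s)) (fun s => g'' s / g' s) hxy
    (fun t ht => (hlog t ht).continuousAt.continuousWithinAt)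
    (fun t ht => hlog t (Ioo_subset_Icc_self ht)) g g'
    (fun t ht => (hderiv t (hsub ht)).1.continuousAt.continuousWithinAt)
    (fun t ht => (hderiv t (hsub (Ioo_subset_Icc_self ht))).1)
  have hcS : c ∈ S := hsub (Ioo_subset_Icc_self hc)
  have hpos : 0 < |g' c| := abs_pos.mpr (hne c hcS)
  have habs := congrArg abs h
  simp only [abs_mul, abs_div] at habs
  have hquot : |g'' c| / |g' c| ≤ K * |g' c| := by
    rw [div_le_iff₀ hpos]
    linarith [hren c hcS, sq (|g' c|)]
  rw [abs_sub_comm (Real.log _), abs_sub_comm (g x)]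
  refine le_of_mul_le_mul_right ?_ hpos
  rw [← habs]
  linarith [mul_le_mul_of_nonneg_left hquot (abs_nonneg (g y - g x))]

/-- One-sided distortion bound for `gᵐ`, in terms of the distance between the endpoints of the two
orbit segments. That distance absorbs the geometric series of the earlier ones. -/
theorem prod_abs_deriv_le {d K : ℝ} (hd : 1 < d) (hK : 0 < K) {n : ℕ} {ω : Set ℝ}
    {g g' g'' : ℝ → ℝ}
    (hinterval : ∀ j < n, (g^[j] '' ω).OrdConnected)
    (hderiv : ∀ j < n, ∀ θ ∈ g^[j] '' ω,
      HasDerivAt g (g' θ) θ ∧ HasDerivAt g' (g'' θ) θ)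
    (hexp : ∀ j < n, ∀ θ ∈ g^[j] '' ω, d ≤ |g' θ|)
    (hren : ∀ j < n, ∀ θ ∈ g^[j] '' ω, |g'' θ| ≤ K * |g' θ| ^ 2)
    {x y : ℝ} (hx : x ∈ ω) (hy : y ∈ ω) {m : ℕ} (hm : m ≤ n) :
    ∏ j ∈ Finset.range m, |g' (g^[j] x)| ≤
      Real.exp (d * K / (d - 1) * |g^[m] x - g^[m] y|) *
        ∏ j ∈ Finset.range m, |g' (g^[j] y)| := by
  induction m with
  | zero =>
    simp only [Finset.range_zero, Finset.prod_empty, mul_one]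
    exact Real.one_le_exp
      (mul_nonneg (div_nonneg (by positivity) (by linarith)) (abs_nonneg _))
  | succ m ih =>
    have hmn : m < n := hm
    have hxm : g^[m] x ∈ g^[m] '' ω := mem_image_of_mem _ hx
    have hym : g^[m] y ∈ g^[m] '' ω := mem_image_of_mem _ hy
    have hpos : ∀ θ ∈ g^[m] '' ω, 0 < |g' θ| := fun θ hθ => by
      linarith [hexp m hmn θ hθ]
    have hD := mul_abs_sub_le_of_expanding (hinterval m hmn)
      (fun θ hθ => (hderiv m hmn θ hθ).1) (hexp m hmn) hxm hym
    have hL := abs_log_deriv_sub_le (hinterval m hmn) (hderiv m hmn)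
      (fun θ hθ => abs_pos.mp (hpos θ hθ)) (hren m hmn) hxm hym
    rw [← Function.iterate_succ_apply' g, ← Function.iterate_succ_apply' g] at hD hL
    have hstep : |g' (g^[m] x)| ≤
        Real.exp (K * |g^[m + 1] x - g^[m + 1] y|) * |g' (g^[m] y)| := by
      rw [← Real.exp_log (hpos _ hxm), ← Real.exp_log (hpos _ hym), ← Real.exp_add,
        Real.exp_le_exp, Real.log_abs, Real.log_abs]
      linarith [le_abs_self (Real.log (g' (g^[m] x)) - Real.log (g' (g^[m] y)))]
    have hcoef : d * K / (d - 1) * |g^[m] x - g^[m] y| + K * |g^[m + 1] x - g^[m + 1] y| ≤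
        d * K / (d - 1) * |g^[m + 1] x - g^[m + 1] y| := by
      have hd1 : 0 < d - 1 := sub_pos.mpr hd
      have h := mul_le_mul_of_nonneg_left hD (div_pos hK hd1).le
      have e1 : d * K / (d - 1) = K / (d - 1) * d := by ring
      -- `d / (d - 1)` solves `c / d + 1 = c`, so the constant is reproduced by the step.
      have e2 : d * K / (d - 1) = K / (d - 1) + K := by field_simp; ring
      calc _ = K / (d - 1) * (d * |g^[m] x - g^[m] y|)
              + K * |g^[m + 1] x - g^[m + 1] y| := by rw [e1]; ring
        _ ≤ _ := by rw [e2]; linarith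
    rw [Finset.prod_range_succ, Finset.prod_range_succ]
    calc _ ≤ (Real.exp (d * K / (d - 1) * |g^[m] x - g^[m] y|) *
            ∏ j ∈ Finset.range m, |g' (g^[j] y)|) *
            (Real.exp (K * |g^[m + 1] x - g^[m + 1] y|) * |g' (g^[m] y)|) :=
          mul_le_mul (ih hmn.le) hstep (abs_nonneg _) (by positivity)
      _ = Real.exp (d * K / (d - 1) * |g^[m] x - g^[m] y| +
            K * |g^[m + 1] x - g^[m + 1] y|) *
            ((∏ j ∈ Finset.range m, |g' (g^[j] y)|) * |g' (g^[m] y)|) := by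
          rw [Real.exp_add]; ring
      _ ≤ _ := mul_le_mul_of_nonneg_right (Real.exp_le_exp.mpr hcoef) (by positivity)

/-- **Lemma (bounded distortion).** If along the first `n` iterates of the interval
`ω` the map `g` is C², monotone, expanding (`|g'| ≥ d > 1`) and satisfies the Rényi
condition `|g''| ≤ K |g'|²`, and `gⁿ(ω) ⊆ (0,1]`, then the chain-rule derivatives
`(gⁿ)'` at any two points of `ω` are comparable up to the factor `exp(dK/(d−1))`. -/
theorem bounded_distortion
    (d K : ℝ) (hd : 1 < d) (hK : 0 < K) (n : ℕ) (hn : 1 ≤ n)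
    (ω : Set ℝ) (hω : ω.OrdConnected)
    (g g' g'' : ℝ → ℝ)
    (hinterval : ∀ j < n, (g^[j] '' ω).OrdConnected)
    (hderiv : ∀ j < n, ∀ θ ∈ g^[j] '' ω,
      HasDerivAt g (g' θ) θ ∧ HasDerivAt g' (g'' θ) θ)
    (hmono : ∀ j < n, MonotoneOn g (g^[j] '' ω) ∨ AntitoneOn g (g^[j] '' ω))
    (hexp : ∀ j < n, ∀ θ ∈ g^[j] '' ω, d ≤ |g' θ|)
    (hren : ∀ j < n, ∀ θ ∈ g^[j] '' ω, |g'' θ| ≤ K * |g' θ| ^ 2)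
    (himg : g^[n] '' ω ⊆ Set.Ioc 0 1) :
    ∀ θ₁ ∈ ω, ∀ θ₂ ∈ ω,
      Real.exp (-(d * K / (d - 1))) ≤
          (∏ j ∈ Finset.range n, |g' (g^[j] θ₁)|) /
            (∏ j ∈ Finset.range n, |g' (g^[j] θ₂)|) ∧
        (∏ j ∈ Finset.range n, |g' (g^[j] θ₁)|) /
            (∏ j ∈ Finset.range n, |g' (g^[j] θ₂)|) ≤
          Real.exp (d * K / (d - 1)) := by
  have key : ∀ x ∈ ω, ∀ y ∈ ω, ∏ j ∈ Finset.range n, |g' (g^[j] x)| ≤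
      Real.exp (d * K / (d - 1)) * ∏ j ∈ Finset.range n, |g' (g^[j] y)| := by
    intro x hx y hy
    refine (prod_abs_deriv_le hd hK hinterval hderiv hexp hren hx hy le_rfl).trans ?_
    have h1 := himg (mem_image_of_mem _ hx)
    have h2 := himg (mem_image_of_mem _ hy)
    have hle : |g^[n] x - g^[n] y| ≤ 1 := by
      rw [abs_le]
      constructor <;> linarith [h1.1, h1.2, h2.1, h2.2]
    have hC : 0 ≤ d * K / (d - 1) := div_nonneg (by positivity) (by linarith)
    exact mul_le_mul_of_nonneg_right
      (Real.exp_le_exp.mpr (mul_le_of_le_one_right hC hle)) (by positivity)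
  intro θ₁ h₁ θ₂ h₂
  have hpos : 0 < ∏ j ∈ Finset.range n, |g' (g^[j] θ₂)| := Finset.prod_pos fun j hj => by
    linarith [hexp j (Finset.mem_range.mp hj) _ (mem_image_of_mem _ h₂)]
  constructor
  · rw [le_div_iff₀ hpos, Real.exp_neg, inv_mul_le_iff₀ (Real.exp_pos _)]
    exact key θ₂ h₂ θ₁ h₁
  · rw [div_le_iff₀ hpos]
    exact key θ₁ h₁ θ₂ h₂
end

section
/- Let a₀ ∈ (0,2], 0 < α ≤ 1, let ω ⊆ (0,1] be an interval, and let g be affine on ω with slope s satisfying |s| ≥ 16 and mapping ω bijectively onto (0,1]. Let Y : (0,1] → [−2,2] be C² with |Y'(θ)| ≤ α and |Y''(θ)| ≤ α for all θ. Define Y₁ : (0,1] → ℝ by Y₁(t) = a₀ + α sin(2π σ(t)) − Y(σ(t))², where σ = (g|_ω)^{−1} : (0,1] → ω. Then Y₁ is C² with |Y₁'(t)| ≤ α and |Y₁''(t)| ≤ α for all t ∈ (0,1]; that is, the image under the skew product of an admissible curve restricted to a partition element is again an admissible curve. -/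
/-!
The inverse branch `σ(t) = (t - b) / s` contracts by `1 / |s| ≤ 1 / 16`, and it maps `(0,1]` into
`ω ⊆ (0,1]`. By the chain rule, with everything evaluated at `σ(t)`,
`Y₁' = (2πα cos(2πσ) - 2 Y Y') / s` and
`Y₁'' = (-4π²α sin(2πσ) - 2 Y'² - 2 Y Y'') / s²`.
Since `|Y| ≤ 2`, `|Y'|, |Y''| ≤ α ≤ 1`, the numerators are at most `(2π + 4) α ≤ 16 α` and
`(4π² + 6) α ≤ 256 α` in absolute value, which the factors `1 / |s|` and `1 / s²` absorb.
-/

open Set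

/-- The fiber maps `f_α(θ,x) = a₀ + α sin(2πθ) − x²`. -/
noncomputable def fA (a₀ α θ x : ℝ) : ℝ := a₀ + α * Real.sin (2 * Real.pi * θ) - x ^ 2

/-- The numerator of `Y₁'` is at most `(2π + 4) α ≤ 16 α`; here `c` is the cosine, `y = Y` and
`y₁ = Y'`. -/
lemma abs_numerator_deriv_le {α c y y₁ : ℝ} (hα : 0 < α) (hc : |c| ≤ 1) (hy : |y| ≤ 2)
    (hy₁ : |y₁| ≤ α) : |α * (c * (2 * Real.pi)) - 2 * y * y₁| ≤ 16 * α := by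
  have h1 : |α * (c * (2 * Real.pi))| ≤ α * (1 * (2 * Real.pi)) := by
    rw [abs_mul, abs_mul, abs_of_pos hα, abs_of_pos Real.two_pi_pos]
    gcongr
  have h2 : |2 * y * y₁| ≤ 2 * 2 * α := by
    rw [abs_mul, abs_mul, abs_two]
    gcongr
  have h3 := abs_sub (α * (c * (2 * Real.pi))) (2 * y * y₁)
  nlinarith [Real.pi_le_four]

/-- The numerator of `Y₁''` is at most `(4π² + 6) α ≤ 256 α`; here `c` is the sine, `y = Y`,
`y₁ = Y'` and `y₂ = Y''`. The hypothesis `α ≤ 1` gives `Y'² ≤ α² ≤ α`. -/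
lemma abs_numerator_deriv2_le {α c y y₁ y₂ : ℝ} (hα : 0 < α) (hα1 : α ≤ 1) (hc : |c| ≤ 1)
    (hy : |y| ≤ 2) (hy₁ : |y₁| ≤ α) (hy₂ : |y₂| ≤ α) :
    |α * (-c * (2 * Real.pi) * (2 * Real.pi)) - (2 * y₁ * y₁ + 2 * y * y₂)| ≤ 256 * α := by
  have h1 : |α * (-c * (2 * Real.pi) * (2 * Real.pi))|
      ≤ α * (1 * (2 * Real.pi) * (2 * Real.pi)) := by
    rw [abs_mul, abs_mul, abs_mul, abs_neg, abs_of_pos hα, abs_of_pos Real.two_pi_pos]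
    gcongr
  have h2 : |2 * y₁ * y₁| ≤ 2 * 1 * α := by
    rw [abs_mul, abs_mul, abs_two]
    gcongr
    exact hy₁.trans hα1
  have h3 : |2 * y * y₂| ≤ 2 * 2 * α := by
    rw [abs_mul, abs_mul, abs_two]
    gcongr
  have h4 := abs_sub (α * (-c * (2 * Real.pi) * (2 * Real.pi))) (2 * y₁ * y₁ + 2 * y * y₂)
  have h5 := abs_add_le (2 * y₁ * y₁) (2 * y * y₂)
  have h6 : Real.pi * Real.pi ≤ 16 := by nlinarith [Real.pi_le_four, Real.pi_pos]
  nlinarith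

/-- Derivative of `θ ↦ f_α(θ, Y(θ))` along a curve. -/
lemma hasDerivWithinAt_fA {a₀ α y₁ θ : ℝ} {Y : ℝ → ℝ} {S : Set ℝ}
    (h : HasDerivWithinAt Y y₁ S θ) :
    HasDerivWithinAt (fun x => fA a₀ α x (Y x))
      (α * (Real.cos (2 * Real.pi * θ) * (2 * Real.pi)) - 2 * Y θ * y₁) S θ := by
  have hl : HasDerivWithinAt (fun x : ℝ => 2 * Real.pi * x) (2 * Real.pi) S θ := by
    simpa using (hasDerivWithinAt_id θ S).const_mul (2 * Real.pi)
  have := ((hl.sin.const_mul α).const_add a₀).sub (h.pow 2)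
  exact this.congr_deriv (by norm_num)

/-- Second derivative of `θ ↦ f_α(θ, Y(θ))` along a curve. -/
lemma hasDerivWithinAt_deriv_fA {α y₂ θ : ℝ} {Y Y' : ℝ → ℝ} {S : Set ℝ}
    (h : HasDerivWithinAt Y (Y' θ) S θ) (h' : HasDerivWithinAt Y' y₂ S θ) :
    HasDerivWithinAt
      (fun x => α * (Real.cos (2 * Real.pi * x) * (2 * Real.pi)) - 2 * Y x * Y' x)
      (α * (-Real.sin (2 * Real.pi * θ) * (2 * Real.pi) * (2 * Real.pi))
        - (2 * Y' θ * Y' θ + 2 * Y θ * y₂)) S θ := by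
  have hl : HasDerivWithinAt (fun x : ℝ => 2 * Real.pi * x) (2 * Real.pi) S θ := by
    simpa using (hasDerivWithinAt_id θ S).const_mul (2 * Real.pi)
  exact ((hl.cos.mul_const (2 * Real.pi)).const_mul α).sub ((h.const_mul 2).mul h')

/-- **Lemma (invariance of admissible curves).** Let `g` be affine with slope `s`,
`|s| ≥ 16`, on a partition element `ω`, mapping it bijectively onto `(0,1]`, and let
`Y : (0,1] → [−2,2]` be an admissible curve (`C²` with `|Y'| ≤ α`, `|Y''| ≤ α`).
Then the image curve `Y₁(t) = a₀ + α sin(2πσ(t)) − Y(σ(t))²`, where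
`σ(t) = (t − b)/s` is the inverse branch of `g|_ω`, is again an admissible curve:
it is `C²` on `(0,1]` with `|Y₁'| ≤ α` and `|Y₁''| ≤ α`. -/
theorem admissible_curve_invariant
    (a₀ α : ℝ) (ha₀ : a₀ ∈ Set.Ioc (0 : ℝ) 2) (hα : α ∈ Set.Ioc (0 : ℝ) 1)
    (ω : Set ℝ) (hωsub : ω ⊆ Set.Ioc 0 1) (hωint : ω.OrdConnected)
    (s b : ℝ) (hs : 16 ≤ |s|)
    (g : ℝ → ℝ) (hgaff : ∀ θ ∈ ω, g θ = s * θ + b)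
    (hbij : Set.BijOn g ω (Set.Ioc 0 1))
    (Y Y' Y'' : ℝ → ℝ)
    (hYval : ∀ θ ∈ Set.Ioc (0 : ℝ) 1, Y θ ∈ Set.Icc (-2 : ℝ) 2)
    (hY1 : ∀ θ ∈ Set.Ioc (0 : ℝ) 1, HasDerivWithinAt Y (Y' θ) (Set.Ioc 0 1) θ)
    (hY2 : ∀ θ ∈ Set.Ioc (0 : ℝ) 1, HasDerivWithinAt Y' (Y'' θ) (Set.Ioc 0 1) θ)
    (hYb1 : ∀ θ ∈ Set.Ioc (0 : ℝ) 1, |Y' θ| ≤ α)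
    (hYb2 : ∀ θ ∈ Set.Ioc (0 : ℝ) 1, |Y'' θ| ≤ α) :
    ∃ Y₁' Y₁'' : ℝ → ℝ, ∀ t ∈ Set.Ioc (0 : ℝ) 1,
      HasDerivWithinAt (fun u => fA a₀ α ((u - b) / s) (Y ((u - b) / s)))
          (Y₁' t) (Set.Ioc 0 1) t ∧
        HasDerivWithinAt Y₁' (Y₁'' t) (Set.Ioc 0 1) t ∧
        |Y₁' t| ≤ α ∧ |Y₁'' t| ≤ α := by
  have hs0 : s ≠ 0 := by
    rintro rfl
    norm_num at hs
  have hspos : 0 < |s| := abs_pos.mpr hs0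
  -- Surjectivity of `g` onto `(0,1]` places `σ(t)` in `ω`, hence in the domain of `Y`.
  have hσ : MapsTo (fun u => (u - b) / s) (Ioc 0 1) (Ioc 0 1) := by
    intro t ht
    obtain ⟨θ, hθ, rfl⟩ := hbij.surjOn ht
    have h : (g θ - b) / s = θ := by
      rw [hgaff θ hθ]
      field_simp
      ring
    simpa only [h] using hωsub hθ
  have hσd : ∀ t, HasDerivWithinAt (fun u => (u - b) / s) (1 / s) (Ioc 0 1) t := fun t =>
    ((hasDerivWithinAt_id t _).sub_const b).div_const s
  refine ⟨fun t => (α * (Real.cos (2 * Real.pi * ((t - b) / s)) * (2 * Real.pi))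
      - 2 * Y ((t - b) / s) * Y' ((t - b) / s)) * (1 / s),
    fun t => (α * (-Real.sin (2 * Real.pi * ((t - b) / s)) * (2 * Real.pi) * (2 * Real.pi))
      - (2 * Y' ((t - b) / s) * Y' ((t - b) / s) + 2 * Y ((t - b) / s) * Y'' ((t - b) / s)))
      * (1 / s) * (1 / s), fun t ht => ?_⟩
  have hm : (t - b) / s ∈ Ioc (0 : ℝ) 1 := hσ ht
  have hy : |Y ((t - b) / s)| ≤ 2 := abs_le.mpr (hYval _ hm)
  refine ⟨?_, ?_, ?_, ?_⟩
  · exact (hasDerivWithinAt_fA (hY1 _ hm)).comp t (hσd t) hσ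
  · exact ((hasDerivWithinAt_deriv_fA (hY1 _ hm) (hY2 _ hm)).comp t (hσd t) hσ).mul_const _
  · have h := abs_numerator_deriv_le hα.1 (Real.abs_cos_le_one (2 * Real.pi * ((t - b) / s)))
      hy (hYb1 _ hm)
    beta_reduce
    rw [mul_one_div, abs_div, div_le_iff₀ hspos]
    nlinarith [hα.1]
  · have h := abs_numerator_deriv2_le hα.1 hα.2
      (Real.abs_sin_le_one (2 * Real.pi * ((t - b) / s))) hy (hYb1 _ hm) (hYb2 _ hm)
    beta_reduce
    rw [mul_one_div, mul_one_div, abs_div, abs_div, div_le_iff₀ hspos, div_le_iff₀ hspos]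
    have hss : 256 ≤ |s| * |s| := by nlinarith
    nlinarith [hα.1]
end

section
/- Let a₀ ∈ ℝ and 0 < α ≤ 1, and let Y : (0,1] → ℝ be a C² function with |Y(θ)| ≤ 2, |Y'(θ)| ≤ α and |Y''(θ)| ≤ α for all θ ∈ (0,1]. Define Y₁(θ) = a₀ + α sin(2πθ) − Y(θ)². Then for every θ ∈ (0,1], either |Y₁'(θ)| ≥ α/2 or |Y₁''(θ)| ≥ 4α. -/
/-!
The two derivatives of `α sin (2πθ)` cannot both be small, and the contribution of `Y ^ 2`
is too small to compensate. If the first derivative of `Y₁` is below `α / 2` in absolute value,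
then `2πα |cos (2πθ)| < α / 2 + 4α`, so `|cos (2πθ)| < 3 / 4` and `|sin (2πθ)| ≥ 1 / 2`.
The sine term of the second derivative is then at least `18α` in absolute value, while the
remaining terms contribute at most `2α ^ 2 + 4α ≤ 6α`. The crude bound `π > 3` suffices.
-/

open Set

/-- **Lemma (transversality of image curves, first part).** If `Y : (0,1] → ℝ` is
`C²` with `|Y| ≤ 2`, `|Y'| ≤ α`, `|Y''| ≤ α` (`0 < α ≤ 1`), and
`Y₁(θ) = a₀ + α sin(2πθ) − Y(θ)²`, then at every `θ ∈ (0,1]` either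
`|Y₁'(θ)| ≥ α/2` or `|Y₁''(θ)| ≥ 4α`, where
`Y₁'(θ) = 2πα cos(2πθ) − 2Y(θ)Y'(θ)` and
`Y₁''(θ) = −4π²α sin(2πθ) − 2Y'(θ)² − 2Y(θ)Y''(θ)`. -/
theorem image_curve_nonflat
    (a₀ α : ℝ) (hα : α ∈ Set.Ioc (0 : ℝ) 1)
    (Y Y' Y'' : ℝ → ℝ)
    (hYval : ∀ θ ∈ Set.Ioc (0 : ℝ) 1, |Y θ| ≤ 2)
    (hY1 : ∀ θ ∈ Set.Ioc (0 : ℝ) 1, HasDerivWithinAt Y (Y' θ) (Set.Ioc 0 1) θ)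
    (hY2 : ∀ θ ∈ Set.Ioc (0 : ℝ) 1, HasDerivWithinAt Y' (Y'' θ) (Set.Ioc 0 1) θ)
    (hYb1 : ∀ θ ∈ Set.Ioc (0 : ℝ) 1, |Y' θ| ≤ α)
    (hYb2 : ∀ θ ∈ Set.Ioc (0 : ℝ) 1, |Y'' θ| ≤ α) :
    ∀ θ ∈ Set.Ioc (0 : ℝ) 1,
      α / 2 ≤ |2 * Real.pi * α * Real.cos (2 * Real.pi * θ) - 2 * Y θ * Y' θ| ∨
      4 * α ≤ |-(4 * Real.pi ^ 2 * α * Real.sin (2 * Real.pi * θ)) -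
                2 * Y' θ ^ 2 - 2 * Y θ * Y'' θ| := by
  intro θ hθ
  obtain ⟨hα0, hα1⟩ := hα
  have hpi := Real.pi_gt_three
  have hsc := Real.sin_sq_add_cos_sq (2 * Real.pi * θ)
  generalize Real.sin (2 * Real.pi * θ) = s at *
  generalize Real.cos (2 * Real.pi * θ) = c at *
  have hYY' : |Y θ * Y' θ| ≤ 2 * α := by
    rw [abs_mul]
    exact mul_le_mul (hYval θ hθ) (hYb1 θ hθ) (abs_nonneg _) (by norm_num)
  have hYY'' : |Y θ * Y'' θ| ≤ 2 * α := by
    rw [abs_mul]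
    exact mul_le_mul (hYval θ hθ) (hYb2 θ hθ) (abs_nonneg _) (by norm_num)
  have hY'sq : Y' θ ^ 2 ≤ α := by
    have h := pow_le_pow_left₀ (abs_nonneg _) (hYb1 θ hθ) 2
    rw [sq_abs] at h
    nlinarith
  have hY'0 := sq_nonneg (Y' θ)
  rw [or_iff_not_imp_left, not_le]
  intro h
  rw [abs_lt] at h
  rw [abs_le] at hYY' hYY''
  have hc : |c| < 3 / 4 := by
    by_contra! hc
    have h1 : 6 * α * (3 / 4) ≤ 2 * Real.pi * α * |c| :=
      mul_le_mul (by nlinarith) hc (by norm_num) (by positivity)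
    have h2 : 2 * Real.pi * α * |c| = |2 * Real.pi * α * c| := by
      rw [abs_mul, abs_of_pos (by positivity : 0 < 2 * Real.pi * α)]
    have h3 : |2 * Real.pi * α * c| < 6 * α * (3 / 4) := by
      rw [abs_lt]
      constructor <;> linarith
    linarith
  have hs : 1 / 2 ≤ |s| := by
    rw [← sq_abs s, ← sq_abs c] at hsc
    nlinarith [abs_nonneg s, abs_nonneg c]
  have hpi2 : 36 ≤ 4 * Real.pi ^ 2 := by nlinarith
  have hmain : 36 * α * (1 / 2) ≤ 4 * Real.pi ^ 2 * α * |s| :=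
    mul_le_mul (by nlinarith) hs (by norm_num) (by positivity)
  rw [le_abs]
  rcases abs_cases s with ⟨h1, -⟩ | ⟨h1, -⟩
  · right
    rw [h1] at hmain
    linarith
  · left
    rw [h1] at hmain
    linarith
end

section
/- Let a₀ ∈ ℝ and 0 < α ≤ 1, and let Y : (0,1] → ℝ be a C² function with |Y(θ)| ≤ 2, |Y'(θ)| ≤ α and |Y''(θ)| ≤ α for all θ ∈ (0,1]. Define Y₁(θ) = a₀ + α sin(2πθ) − Y(θ)². Then for every interval I ⊆ ℝ, Leb({θ ∈ (0,1] : Y₁(θ) ∈ I}) ≤ 6|I|/α + 2√(|I|/α), where |I| denotes the length of I and Leb is Lebesgue measure. -/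
/-!
Write `F θ = a₀ + α sin (2πθ) - Y θ ^ 2`. Since `|2 Y Y'| ≤ 4α` and
`|2 (Y'² + Y Y'')| ≤ 6α`, the sine term dominates one of the first two derivatives of `F`
everywhere on `(0,1]`:

* on `(0,1/12]`, `[5/12,7/12]`, `[11/12,1]` one has `|cos (2πθ)| ≥ √3/2 ≥ 17/20`, so `|F'| ≥ α` with
  constant sign;
* on `[1/12,5/12]` and `[7/12,11/12]` one has `|sin (2πθ)| ≥ 1/2`, so `|F''| ≥ 8α` with constant
  sign; each of these is cut in two according to the sign of `F'`.

On a piece of the first kind two points `x < y` with `F x, F y ∈ I` satisfy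
`α (y - x) ≤ |F y - F x| ≤ |I|` (`le_of_deriv_ge`); on a piece of the second kind they satisfy
`4α (y - x)² ≤ |I|` (`sq_le_of_concave_left`, `sq_le_of_concave_right`). Bounding measure by
diameter on the seven pieces gives the total `3 |I|/α + 2 √(|I|/α)`.
-/

open MeasureTheory Set

lemma le_of_deriv_nonneg_Icc {g g' : ℝ → ℝ} {x y : ℝ} (hxy : x ≤ y)
    (hg : ∀ t ∈ Icc x y, HasDerivWithinAt g (g' t) (Icc x y) t)
    (h0 : ∀ t ∈ Icc x y, 0 ≤ g' t) : g x ≤ g y := by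
  have hm : MonotoneOn g (Icc x y) := by
    refine monotoneOn_of_hasDerivWithinAt_nonneg (f' := g') (convex_Icc x y)
      (fun t ht => (hg t ht).continuousWithinAt) ?_ ?_
    · intro t ht
      exact (hg t (interior_subset ht)).mono interior_subset
    · intro t ht
      exact h0 t (interior_subset ht)
  exact hm (left_mem_Icc.2 hxy) (right_mem_Icc.2 hxy) hxy

lemma le_of_deriv_ge {F F' : ℝ → ℝ} {x y c : ℝ} (hxy : x ≤ y)
    (hF : ∀ t ∈ Icc x y, HasDerivWithinAt F (F' t) (Icc x y) t)
    (h : ∀ t ∈ Icc x y, c ≤ F' t) : c * (y - x) ≤ F y - F x := by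
  have := le_of_deriv_nonneg_Icc (g := fun t => F t - c * t) (g' := fun t => F' t - c * 1) hxy
    (fun t ht => (hF t ht).sub ((hasDerivWithinAt_id t _).const_mul c))
    (fun t ht => by linarith [h t ht])
  linarith

/-- Quadratic growth of a uniformly concave function on its increasing side. -/
lemma sq_le_of_concave_left {F F' F'' : ℝ → ℝ} {x y c : ℝ} (hxy : x ≤ y)
    (hF : ∀ t ∈ Icc x y, HasDerivWithinAt F (F' t) (Icc x y) t)
    (hF' : ∀ t ∈ Icc x y, HasDerivWithinAt F' (F'' t) (Icc x y) t)
    (h : ∀ t ∈ Icc x y, F'' t ≤ -(2 * c)) (hy : 0 ≤ F' y) :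
    c * (y - x) ^ 2 ≤ F y - F x := by
  have h1 : ∀ t ∈ Icc x y, 2 * c * (y - t) ≤ F' t := by
    intro t ht
    have hs : Icc t y ⊆ Icc x y := Icc_subset_Icc_left ht.1
    have := le_of_deriv_ge (F := fun s => -F' s) (F' := fun s => -F'' s) (c := 2 * c) ht.2
      (fun s hs' => ((hF' s (hs hs')).mono hs).neg) (fun s hs' => by linarith [h s (hs hs')])
    linarith
  have := le_of_deriv_nonneg_Icc (g := fun t => F t + c * (y - t) ^ 2)
    (g' := fun t => F' t + c * (2 * (y - t) * (-1))) hxy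
    (fun t ht => by
      refine (hF t ht).add (HasDerivWithinAt.const_mul c ?_)
      have := ((hasDerivWithinAt_id t (Icc x y)).const_sub y).pow 2
      exact this.congr_deriv (by simp))
    (fun t ht => by linarith [h1 t ht])
  simp only [sub_self] at this
  linarith

/-- Quadratic decay of a uniformly concave function on its decreasing side. -/
lemma sq_le_of_concave_right {F F' F'' : ℝ → ℝ} {x y c : ℝ} (hxy : x ≤ y)
    (hF : ∀ t ∈ Icc x y, HasDerivWithinAt F (F' t) (Icc x y) t)
    (hF' : ∀ t ∈ Icc x y, HasDerivWithinAt F' (F'' t) (Icc x y) t)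
    (h : ∀ t ∈ Icc x y, F'' t ≤ -(2 * c)) (hx : F' x ≤ 0) :
    c * (y - x) ^ 2 ≤ F x - F y := by
  have h1 : ∀ t ∈ Icc x y, F' t ≤ -(2 * c * (t - x)) := by
    intro t ht
    have hs : Icc x t ⊆ Icc x y := Icc_subset_Icc_right ht.2
    have := le_of_deriv_ge (F := fun s => -F' s) (F' := fun s => -F'' s) (c := 2 * c) ht.1
      (fun s hs' => ((hF' s (hs hs')).mono hs).neg) (fun s hs' => by linarith [h s (hs hs')])
    linarith
  have := le_of_deriv_nonneg_Icc (g := fun t => -F t - c * (t - x) ^ 2)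
    (g' := fun t => -F' t - c * (2 * (t - x) * 1)) hxy
    (fun t ht => by
      refine (hF t ht).neg.sub (HasDerivWithinAt.const_mul c ?_)
      have := ((hasDerivWithinAt_id t (Icc x y)).sub_const x).pow 2
      exact this.congr_deriv (by simp))
    (fun t ht => by linarith [h1 t ht])
  simp only [sub_self] at this
  linarith

lemma volume_le_of_sub_le {E : Set ℝ} {d : ℝ}
    (h : ∀ x ∈ E, ∀ y ∈ E, x < y → y - x ≤ d) (hd : 0 ≤ d) :
    volume E ≤ ENNReal.ofReal d := by
  refine (Real.volume_le_diam E).trans (Metric.ediam_le fun x hx y hy => ?_)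
  rw [edist_dist, Real.dist_eq]
  refine ENNReal.ofReal_le_ofReal ?_
  rcases lt_trichotomy x y with hxy | hxy | hxy
  · rw [abs_sub_comm, abs_of_pos (sub_pos.2 hxy)]
    exact h x hx y hy hxy
  · simpa [hxy] using hd
  · rw [abs_of_pos (sub_pos.2 hxy)]
    exact h y hy x hx hxy

lemma sub_le_volume {I : Set ℝ} (hI : I.OrdConnected) (hfin : volume I ≠ ⊤) {u v : ℝ}
    (hu : u ∈ I) (hv : v ∈ I) : v - u ≤ (volume I).toReal := by
  have h1 : volume (Icc u v) ≤ volume I := measure_mono (hI.out hu hv)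
  rw [Real.volume_Icc] at h1
  exact (ENNReal.ofReal_le_iff_le_toReal hfin).1 h1

lemma half_le_cos {u : ℝ} (h1 : -(Real.pi / 3) ≤ u) (h2 : u ≤ Real.pi / 3) :
    1 / 2 ≤ Real.cos u := by
  rw [← Real.cos_abs, ← Real.cos_pi_div_three]
  exact Real.cos_le_cos_of_nonneg_of_le_pi (abs_nonneg u) (by linarith [Real.pi_pos])
    (abs_le.2 ⟨h1, h2⟩)

lemma seventeen_twentieths_le_cos {u : ℝ} (h1 : -(Real.pi / 6) ≤ u) (h2 : u ≤ Real.pi / 6) :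
    (17 / 20 : ℝ) ≤ Real.cos u := by
  have h3 : Real.cos (Real.pi / 6) ≤ Real.cos u := by
    rw [← Real.cos_abs u]
    exact Real.cos_le_cos_of_nonneg_of_le_pi (abs_nonneg u) (by linarith [Real.pi_pos])
      (abs_le.2 ⟨h1, h2⟩)
  rw [Real.cos_pi_div_six] at h3
  have : (17 / 10 : ℝ) ≤ √3 := Real.le_sqrt_of_sq_le (by norm_num)
  linarith

/-- **Lemma (transversality of image curves, measure estimate).** If
`Y : (0,1] → ℝ` is `C²` with `|Y| ≤ 2`, `|Y'| ≤ α`, `|Y''| ≤ α` (`0 < α ≤ 1`), and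
`Y₁(θ) = a₀ + α sin(2πθ) − Y(θ)²`, then for every interval `I ⊆ ℝ` the set of
`θ ∈ (0,1]` with `Y₁(θ) ∈ I` has Lebesgue measure at most `6|I|/α + 2√(|I|/α)`. -/
theorem image_curve_measure_estimate
    (a₀ α : ℝ) (hα : α ∈ Set.Ioc (0 : ℝ) 1)
    (Y Y' Y'' : ℝ → ℝ)
    (hYval : ∀ θ ∈ Set.Ioc (0 : ℝ) 1, |Y θ| ≤ 2)
    (hY1 : ∀ θ ∈ Set.Ioc (0 : ℝ) 1, HasDerivWithinAt Y (Y' θ) (Set.Ioc 0 1) θ)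
    (hY2 : ∀ θ ∈ Set.Ioc (0 : ℝ) 1, HasDerivWithinAt Y' (Y'' θ) (Set.Ioc 0 1) θ)
    (hYb1 : ∀ θ ∈ Set.Ioc (0 : ℝ) 1, |Y' θ| ≤ α)
    (hYb2 : ∀ θ ∈ Set.Ioc (0 : ℝ) 1, |Y'' θ| ≤ α)
    (I : Set ℝ) (hI : I.OrdConnected) :
    volume {θ ∈ Set.Ioc (0 : ℝ) 1 |
        a₀ + α * Real.sin (2 * Real.pi * θ) - Y θ ^ 2 ∈ I} ≤
      6 * volume I / ENNReal.ofReal α +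
        2 * (volume I / ENNReal.ofReal α) ^ (1 / 2 : ℝ) := by
  obtain ⟨hα0, hα1⟩ := hα
  have hπ := Real.pi_gt_three
  by_cases hfin : volume I = ⊤
  · have : 6 * volume I / ENNReal.ofReal α = ⊤ := by
      rw [hfin, ENNReal.mul_top (by norm_num), ENNReal.top_div_of_ne_top ENNReal.ofReal_ne_top]
    rw [this, top_add]
    exact le_top
  set F : ℝ → ℝ := fun θ => a₀ + α * Real.sin (2 * Real.pi * θ) - Y θ ^ 2 with hFdef
  set F' : ℝ → ℝ := fun θ => α * (Real.cos (2 * Real.pi * θ) * (2 * Real.pi))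
    - 2 * (Y θ * Y' θ) with hF'def
  set F'' : ℝ → ℝ := fun θ => α * (-Real.sin (2 * Real.pi * θ) * (2 * Real.pi) * (2 * Real.pi))
    - 2 * (Y' θ * Y' θ + Y θ * Y'' θ) with hF''def
  have hlin : ∀ θ : ℝ, HasDerivAt (fun θ : ℝ => 2 * Real.pi * θ) (2 * Real.pi) θ := fun θ => by
    simpa using (hasDerivAt_id θ).const_mul (2 * Real.pi)
  have hF : ∀ θ ∈ Ioc (0 : ℝ) 1, HasDerivWithinAt F (F' θ) (Ioc 0 1) θ := by
    intro θ hθ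
    have h1 := ((((hlin θ).sin).const_mul α).const_add a₀).hasDerivWithinAt (s := Ioc (0 : ℝ) 1)
    refine (h1.sub ((hY1 θ hθ).pow 2)).congr_deriv ?_
    simp only [hF'def]
    push_cast
    ring
  have hF' : ∀ θ ∈ Ioc (0 : ℝ) 1, HasDerivWithinAt F' (F'' θ) (Ioc 0 1) θ := by
    intro θ hθ
    have h1 := ((((hlin θ).cos).mul_const (2 * Real.pi)).const_mul α).hasDerivWithinAt
      (s := Ioc (0 : ℝ) 1)
    exact h1.sub (((hY1 θ hθ).mul (hY2 θ hθ)).const_mul 2)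
  have hb1 : ∀ θ ∈ Ioc (0 : ℝ) 1, |Y θ * Y' θ| ≤ 2 * α := fun θ hθ => by
    rw [abs_mul]
    exact mul_le_mul (hYval θ hθ) (hYb1 θ hθ) (abs_nonneg _) (by norm_num)
  have hb2 : ∀ θ ∈ Ioc (0 : ℝ) 1, |Y' θ * Y' θ + Y θ * Y'' θ| ≤ 3 * α := fun θ hθ => by
    have h1 : |Y' θ * Y' θ| ≤ 1 * α := by
      rw [abs_mul]
      exact mul_le_mul ((hYb1 θ hθ).trans hα1) (hYb1 θ hθ) (abs_nonneg _) (by norm_num)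
    have h2 : |Y θ * Y'' θ| ≤ 2 * α := by
      rw [abs_mul]
      exact mul_le_mul (hYval θ hθ) (hYb2 θ hθ) (abs_nonneg _) (by norm_num)
    linarith [abs_add_le (Y' θ * Y' θ) (Y θ * Y'' θ)]
  have hs1 : ∀ c : ℝ, 17 / 20 ≤ c → 5 * α ≤ α * (c * (2 * Real.pi)) := fun c hc => by
    nlinarith [mul_le_mul hc hπ.le (by norm_num) (by linarith)]
  have hs2 : ∀ s : ℝ, 1 / 2 ≤ s → 14 * α ≤ α * (s * (2 * Real.pi) * (2 * Real.pi)) :=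
    fun s hs => by
      have h1 : 3 ≤ s * (2 * Real.pi) := by nlinarith
      have h2 : 14 ≤ s * (2 * Real.pi) * (2 * Real.pi) := by nlinarith
      nlinarith
  -- The sine term dominates: `5α` against `4α` in `F'`, `14α` against `6α` in `F''`.
  have hpos : ∀ θ ∈ Ioc (0 : ℝ) 1, 17 / 20 ≤ Real.cos (2 * Real.pi * θ) → α ≤ F' θ := by
    intro θ hθ h
    have := abs_le.1 (hb1 θ hθ)
    simp only [hF'def]
    linarith [hs1 _ h]
  have hneg : ∀ θ ∈ Ioc (0 : ℝ) 1, 17 / 20 ≤ -Real.cos (2 * Real.pi * θ) → α ≤ -F' θ := by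
    intro θ hθ h
    have := abs_le.1 (hb1 θ hθ)
    simp only [hF'def]
    linarith [hs1 _ h]
  have hconc : ∀ θ ∈ Ioc (0 : ℝ) 1, 1 / 2 ≤ Real.sin (2 * Real.pi * θ) →
      F'' θ ≤ -(2 * (4 * α)) := by
    intro θ hθ h
    have := abs_le.1 (hb2 θ hθ)
    simp only [hF''def]
    linarith [hs2 _ h]
  have hconv : ∀ θ ∈ Ioc (0 : ℝ) 1, 1 / 2 ≤ -Real.sin (2 * Real.pi * θ) →
      -F'' θ ≤ -(2 * (4 * α)) := by
    intro θ hθ h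
    have := abs_le.1 (hb2 θ hθ)
    simp only [hF''def]
    linarith [hs2 _ h]
  set L : ℝ := (volume I).toReal / α with hL
  have hL0 : 0 ≤ L := div_nonneg ENNReal.toReal_nonneg hα0.le
  have hVL : ∀ u ∈ I, ∀ v ∈ I, v - u ≤ L * α := fun u hu v hv => by
    rw [hL, div_mul_cancel₀ _ hα0.ne']
    exact sub_le_volume hI hfin hu hv
  have hsub : ∀ x y : ℝ, x ∈ Ioc (0 : ℝ) 1 → y ∈ Ioc (0 : ℝ) 1 → Icc x y ⊆ Ioc (0 : ℝ) 1 :=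
    fun x y hx hy t ht => ⟨hx.1.trans_le ht.1, ht.2.trans hy.2⟩
  have hlinE : ∀ d : ℝ, d * α ≤ L * α → d ≤ L := fun d h => le_of_mul_le_mul_right h hα0
  have hsqE : ∀ d : ℝ, 4 * α * d ^ 2 ≤ L * α → d ≤ √L / 2 := fun d h => by
    have h1 : (2 * d) ^ 2 ≤ L := by
      refine le_of_mul_le_mul_right ?_ hα0
      linarith
    linarith [Real.le_sqrt_of_sq_le h1]
  have hA : ∀ a b : ℝ, (∀ θ ∈ Icc a b, 17 / 20 ≤ Real.cos (2 * Real.pi * θ)) →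
      volume ({θ ∈ Ioc (0 : ℝ) 1 | F θ ∈ I} ∩ Icc a b) ≤ ENNReal.ofReal L := by
    intro a b h
    refine volume_le_of_sub_le ?_ hL0
    rintro x ⟨⟨hx, hxI⟩, hxab⟩ y ⟨⟨hy, hyI⟩, hyab⟩ hxy
    have hs := hsub x y hx hy
    have h2 := le_of_deriv_ge (c := α) hxy.le (fun t ht => (hF t (hs ht)).mono hs)
      (fun t ht => hpos t (hs ht) (h t ⟨hxab.1.trans ht.1, ht.2.trans hyab.2⟩))
    exact hlinE _ (by linarith [hVL _ hxI _ hyI])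
  have hB : ∀ a b : ℝ, (∀ θ ∈ Icc a b, 17 / 20 ≤ -Real.cos (2 * Real.pi * θ)) →
      volume ({θ ∈ Ioc (0 : ℝ) 1 | F θ ∈ I} ∩ Icc a b) ≤ ENNReal.ofReal L := by
    intro a b h
    refine volume_le_of_sub_le ?_ hL0
    rintro x ⟨⟨hx, hxI⟩, hxab⟩ y ⟨⟨hy, hyI⟩, hyab⟩ hxy
    have hs := hsub x y hx hy
    have h2 := le_of_deriv_ge (F := fun t => -F t) (F' := fun t => -F' t) (c := α) hxy.le
      (fun t ht => ((hF t (hs ht)).mono hs).neg)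
      (fun t ht => hneg t (hs ht) (h t ⟨hxab.1.trans ht.1, ht.2.trans hyab.2⟩))
    exact hlinE _ (by linarith [hVL _ hyI _ hxI])
  have hsplit : ∀ a b : ℝ,
      volume ({θ ∈ Ioc (0 : ℝ) 1 | F θ ∈ I} ∩ Icc a b ∩ {θ | 0 ≤ F' θ}) ≤
        ENNReal.ofReal (√L / 2) →
      volume ({θ ∈ Ioc (0 : ℝ) 1 | F θ ∈ I} ∩ Icc a b ∩ {θ | F' θ ≤ 0}) ≤
        ENNReal.ofReal (√L / 2) →
      volume ({θ ∈ Ioc (0 : ℝ) 1 | F θ ∈ I} ∩ Icc a b) ≤ ENNReal.ofReal √L := by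
    intro a b h1 h2
    have h3 : {θ ∈ Ioc (0 : ℝ) 1 | F θ ∈ I} ∩ Icc a b ⊆
        ({θ ∈ Ioc (0 : ℝ) 1 | F θ ∈ I} ∩ Icc a b ∩ {θ | 0 ≤ F' θ}) ∪
        ({θ ∈ Ioc (0 : ℝ) 1 | F θ ∈ I} ∩ Icc a b ∩ {θ | F' θ ≤ 0}) := fun θ hθ =>
      (le_total 0 (F' θ)).imp (fun h => ⟨hθ, h⟩) (fun h => ⟨hθ, h⟩)
    refine (measure_mono h3).trans ((measure_union_le _ _).trans ((add_le_add h1 h2).trans ?_))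
    rw [← ENNReal.ofReal_add (by positivity) (by positivity), add_halves]
  have hC : ∀ a b : ℝ, (∀ θ ∈ Icc a b, 1 / 2 ≤ Real.sin (2 * Real.pi * θ)) →
      volume ({θ ∈ Ioc (0 : ℝ) 1 | F θ ∈ I} ∩ Icc a b) ≤ ENNReal.ofReal √L := by
    intro a b h
    refine hsplit a b (volume_le_of_sub_le ?_ (by positivity))
      (volume_le_of_sub_le ?_ (by positivity))
    · rintro x ⟨⟨⟨hx, hxI⟩, hxab⟩, hx0⟩ y ⟨⟨⟨hy, hyI⟩, hyab⟩, hy0⟩ hxy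
      have hs := hsub x y hx hy
      have h2 := sq_le_of_concave_left (c := 4 * α) hxy.le
        (fun t ht => (hF t (hs ht)).mono hs) (fun t ht => (hF' t (hs ht)).mono hs)
        (fun t ht => hconc t (hs ht) (h t ⟨hxab.1.trans ht.1, ht.2.trans hyab.2⟩)) hy0
      exact hsqE _ (h2.trans (hVL _ hxI _ hyI))
    · rintro x ⟨⟨⟨hx, hxI⟩, hxab⟩, hx0⟩ y ⟨⟨⟨hy, hyI⟩, hyab⟩, hy0⟩ hxy
      have hs := hsub x y hx hy
      have h2 := sq_le_of_concave_right (c := 4 * α) hxy.le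
        (fun t ht => (hF t (hs ht)).mono hs) (fun t ht => (hF' t (hs ht)).mono hs)
        (fun t ht => hconc t (hs ht) (h t ⟨hxab.1.trans ht.1, ht.2.trans hyab.2⟩)) hx0
      exact hsqE _ (h2.trans (hVL _ hyI _ hxI))
  have hD : ∀ a b : ℝ, (∀ θ ∈ Icc a b, 1 / 2 ≤ -Real.sin (2 * Real.pi * θ)) →
      volume ({θ ∈ Ioc (0 : ℝ) 1 | F θ ∈ I} ∩ Icc a b) ≤ ENNReal.ofReal √L := by
    intro a b h
    refine hsplit a b (volume_le_of_sub_le ?_ (by positivity))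
      (volume_le_of_sub_le ?_ (by positivity))
    · rintro x ⟨⟨⟨hx, hxI⟩, hxab⟩, hx0⟩ y ⟨⟨⟨hy, hyI⟩, hyab⟩, hy0⟩ hxy
      have hs := hsub x y hx hy
      have h2 := sq_le_of_concave_right (F := fun t => -F t) (F' := fun t => -F' t)
        (F'' := fun t => -F'' t) (c := 4 * α) hxy.le
        (fun t ht => ((hF t (hs ht)).mono hs).neg) (fun t ht => ((hF' t (hs ht)).mono hs).neg)
        (fun t ht => hconv t (hs ht) (h t ⟨hxab.1.trans ht.1, ht.2.trans hyab.2⟩))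
        (neg_nonpos.2 hx0)
      exact hsqE _ (by linarith [hVL _ hxI _ hyI])
    · rintro x ⟨⟨⟨hx, hxI⟩, hxab⟩, hx0⟩ y ⟨⟨⟨hy, hyI⟩, hyab⟩, hy0⟩ hxy
      have hs := hsub x y hx hy
      have h2 := sq_le_of_concave_left (F := fun t => -F t) (F' := fun t => -F' t)
        (F'' := fun t => -F'' t) (c := 4 * α) hxy.le
        (fun t ht => ((hF t (hs ht)).mono hs).neg) (fun t ht => ((hF' t (hs ht)).mono hs).neg)
        (fun t ht => hconv t (hs ht) (h t ⟨hxab.1.trans ht.1, ht.2.trans hyab.2⟩))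
        (neg_nonneg.2 hy0)
      exact hsqE _ (by linarith [hVL _ hyI _ hxI])
  have e1 := hA 0 (1 / 12) fun θ hθ =>
    seventeen_twentieths_le_cos (by nlinarith [hθ.1]) (by nlinarith [hθ.2])
  have e2 := hC (1 / 12) (5 / 12) fun θ hθ => by
    rw [← Real.cos_sub_pi_div_two]
    exact half_le_cos (by nlinarith [hθ.1]) (by nlinarith [hθ.2])
  have e3 := hB (5 / 12) (7 / 12) fun θ hθ => by
    rw [← Real.cos_sub_pi]
    exact seventeen_twentieths_le_cos (by nlinarith [hθ.1]) (by nlinarith [hθ.2])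
  have e4 := hD (7 / 12) (11 / 12) fun θ hθ => by
    rw [← Real.sin_sub_pi, ← Real.cos_sub_pi_div_two]
    exact half_le_cos (by nlinarith [hθ.1]) (by nlinarith [hθ.2])
  have e5 := hA (11 / 12) 1 fun θ hθ => by
    rw [← Real.cos_sub_two_pi]
    exact seventeen_twentieths_le_cos (by nlinarith [hθ.1]) (by nlinarith [hθ.2])
  set E : Set ℝ := {θ ∈ Ioc (0 : ℝ) 1 | F θ ∈ I} with hE
  have hcover : E ⊆ (E ∩ Icc 0 (1 / 12)) ∪ ((E ∩ Icc (1 / 12) (5 / 12)) ∪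
      ((E ∩ Icc (5 / 12) (7 / 12)) ∪ ((E ∩ Icc (7 / 12) (11 / 12)) ∪
      (E ∩ Icc (11 / 12) 1)))) := by
    intro θ hθ
    have h0 : 0 ≤ θ := hθ.1.1.le
    have h1 : θ ≤ 1 := hθ.1.2
    simp only [mem_union, mem_inter_iff, hθ, true_and, mem_Icc]
    grind
  have htot : volume E ≤ ENNReal.ofReal L + (ENNReal.ofReal √L + (ENNReal.ofReal L +
      (ENNReal.ofReal √L + ENNReal.ofReal L))) := by
    refine (measure_mono hcover).trans ((measure_union_le _ _).trans (add_le_add e1 ?_))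
    refine (measure_union_le _ _).trans (add_le_add e2 ?_)
    refine (measure_union_le _ _).trans (add_le_add e3 ?_)
    exact (measure_union_le _ _).trans (add_le_add e4 e5)
  have hLV : volume I / ENNReal.ofReal α = ENNReal.ofReal L := by
    rw [hL, ENNReal.ofReal_div_of_pos hα0, ENNReal.ofReal_toReal hfin]
  have hsq : ENNReal.ofReal √L = ENNReal.ofReal L ^ (1 / 2 : ℝ) := by
    rw [Real.sqrt_eq_rpow, ENNReal.ofReal_rpow_of_nonneg hL0 (by norm_num)]
  rw [mul_div_assoc, hLV, ← hsq]
  refine htot.trans ?_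
  calc ENNReal.ofReal L + (ENNReal.ofReal √L + (ENNReal.ofReal L +
        (ENNReal.ofReal √L + ENNReal.ofReal L)))
      = 3 * ENNReal.ofReal L + 2 * ENNReal.ofReal √L := by ring
    _ ≤ 6 * ENNReal.ofReal L + 2 * ENNReal.ofReal √L := by gcongr; norm_num
end

section
/- Let g be a piecewise linear Markov expanding map with expansion constant d ≥ 16 whose partition elements all have length at most 1/16, let a₀ ∈ (0,2], let 0 < α ≤ 1 be sufficiently small, and let Y : (0,1] → [−2,2] be C² with |Y'| ≤ α and |Y''| ≤ α (an admissible curve). Define Z(θ) = a₀ + α sin(2πθ) − Y(θ)². Then there exist two disjoint collections 𝒫₁ and 𝒫₂ of partition elements of g such that |Z(θ) − Z(θ̃)| ≥ α/100 whenever θ belongs to an element of 𝒫₁ and θ̃ belongs to an element of 𝒫₂, and such that 1/16 ≤ Leb(⋃_{ω∈𝒫₁} ω) ≤ Leb(⋃_{ω∈𝒫₂} ω) ≤ 15/16. -/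
/-!
Up to the factor `α`, the curve `Z` is `sin(2πθ)` minus the function `V / α` with `V = Y²`.
The slope `v = 2 Y Y'` of `V` is `(4α + 2α²)`-Lipschitz, and this decides where to look for two
intervals `K`, `L` whose images under `Z` are `α / 100` apart.

* If `v ≥ -(9/4) α` on `[5/32, 27/32]`, the peak `[5/32, 11/32]` of the sine lies above its trough
  `[21/32, 27/32]`, because `V` cannot undo the sine difference of at least `8/5`.
* Otherwise `v < -(9/4) α` at some `t`; then, for `α < 1/25`, `v ≤ -(1/5) α` within distance
  `1/2` of `t`. On the half of `(0, 1]` containing `t` there are two intervals at distance `1/16`,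
  one of them reaching the end point of `(0, 1]`, across which the sine does not decrease
  (`(0, 1/8]` and `[3/16, 3/8]`, or `[5/8, 13/16]` and `[7/8, 1]`), and `-V` gains the rest.

`𝒫₁` and `𝒫₂` consist of the partition elements contained in `K` and in `L`. An element that meets
an interval without being contained in it contains one of the end points, so all but two elements
(one, when the interval reaches an end of `(0, 1]`) of length at most `1/16` are retained;
the intervals have length `3/16`, respectively `1/8`, so measure `1/16` remains. Since
the two unions are disjoint in `(0, 1]`, each also has measure at most `15/16`.
-/

open MeasureTheory Set

/-- The indices of the nonempty members of `ω` contained in `K`. Empty members are left out so that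
disjoint `K` give disjoint index sets. -/
def inside (ω : ℕ → Set ℝ) (K : Set ℝ) : Set ℕ := {i | (ω i).Nonempty ∧ ω i ⊆ K}

/-- The at most one partition element through `p` is contained in a set of measure at most `1/16`. -/
lemma exists_cap (ω : ℕ → Set ℝ) (hdisj : Pairwise (Function.onFun Disjoint ω))
    (hsmall : ∀ i, volume (ω i) ≤ 1 / 16) (p : ℝ) :
    ∃ S : Set ℝ, volume S ≤ 1 / 16 ∧ ∀ i, p ∈ ω i → ω i ⊆ S := by
  by_cases h : ∃ i, p ∈ ω i
  · obtain ⟨i, hi⟩ := h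
    refine ⟨ω i, hsmall i, fun j hj => ?_⟩
    by_cases hij : i = j
    · rw [hij]
    · exact absurd hj (Set.disjoint_left.1 (hdisj hij) hi)
  · exact ⟨∅, by simp, fun i hi => absurd ⟨i, hi⟩ h⟩

/-- If the elements not contained in `K` meet `K` only inside `S`, then the elements contained in
`K` fill `K` up to the measure of `S`. -/
lemma volume_inside_core (ω : ℕ → Set ℝ) (hcover : (⋃ i, ω i) = Set.Ioc 0 1)
    (K S : Set ℝ) (hK : K ⊆ Set.Ioc 0 1)
    (h : ∀ i, ∀ x ∈ ω i, x ∈ K → ∀ z ∈ ω i, z ∉ K → x ∈ S) :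
    volume K ≤ volume (⋃ i ∈ inside ω K, ω i) + volume S := by
  refine le_trans (measure_mono ?_) (measure_union_le _ _)
  intro x hx
  have hx1 : x ∈ ⋃ i, ω i := by rw [hcover]; exact hK hx
  obtain ⟨i, hi⟩ := Set.mem_iUnion.1 hx1
  by_cases hs : ω i ⊆ K
  · left
    exact Set.mem_biUnion (show i ∈ inside ω K from ⟨⟨x, hi⟩, hs⟩) hi
  · right
    obtain ⟨z, hz, hzK⟩ := Set.not_subset.1 hs
    exact h i x hi hx z hz hzK

lemma volume_inside_mid (ω : ℕ → Set ℝ) (hconn : ∀ i, (ω i).OrdConnected)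
    (hdisj : Pairwise (Function.onFun Disjoint ω)) (hcover : (⋃ i, ω i) = Set.Ioc 0 1)
    (hsmall : ∀ i, volume (ω i) ≤ 1 / 16) (p q : ℝ) (hp : 0 < p) (hq : q ≤ 1)
    (hpq : q - p = 3 / 16) :
    1 / 16 ≤ volume (⋃ i ∈ inside ω (Set.Icc p q), ω i) := by
  obtain ⟨S, hS, hS'⟩ := exists_cap ω hdisj hsmall p
  obtain ⟨T, hT, hT'⟩ := exists_cap ω hdisj hsmall q
  have h := volume_inside_core ω hcover (Set.Icc p q) (S ∪ T)
    (fun x hx => ⟨by linarith [hx.1], by linarith [hx.2]⟩) (by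
      intro i x hx hxK z hz hzK
      rcases lt_or_ge z p with h1 | h1
      · exact Or.inl (hS' i ((hconn i).out hz hx ⟨h1.le, hxK.1⟩) hx)
      · have h2 : q < z := by
          by_contra h2
          exact hzK ⟨h1, not_lt.1 h2⟩
        exact Or.inr (hT' i ((hconn i).out hx hz ⟨hxK.2, h2.le⟩) hx))
  rw [Real.volume_Icc, hpq] at h
  have h2 : volume (S ∪ T) ≤ 1 / 16 + 1 / 16 := (measure_union_le _ _).trans (add_le_add hS hT)
  have h3 := h.trans (add_le_add le_rfl h2)
  have e1 : ENNReal.ofReal (3 / 16) = 1 / 16 + (1 / 16 + 1 / 16) := by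
    have : (1 / 16 : ENNReal) = ENNReal.ofReal (1 / 16) := by
      rw [ENNReal.ofReal_div_of_pos (by norm_num)]; norm_num
    rw [this, ← ENNReal.ofReal_add (by norm_num) (by norm_num),
      ← ENNReal.ofReal_add (by norm_num) (by norm_num)]
    norm_num
  rw [e1] at h3
  exact (ENNReal.add_le_add_iff_right (by finiteness)).1 h3

lemma ofReal_eighth : ENNReal.ofReal (1 / 8) = 1 / 16 + 1 / 16 := by
  have : (1 / 16 : ENNReal) = ENNReal.ofReal (1 / 16) := by
    rw [ENNReal.ofReal_div_of_pos (by norm_num)]; norm_num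
  rw [this, ← ENNReal.ofReal_add (by norm_num) (by norm_num)]
  norm_num

lemma volume_inside_left (ω : ℕ → Set ℝ) (hsub : ∀ i, ω i ⊆ Set.Ioc 0 1)
    (hconn : ∀ i, (ω i).OrdConnected)
    (hdisj : Pairwise (Function.onFun Disjoint ω)) (hcover : (⋃ i, ω i) = Set.Ioc 0 1)
    (hsmall : ∀ i, volume (ω i) ≤ 1 / 16) :
    1 / 16 ≤ volume (⋃ i ∈ inside ω (Set.Ioc 0 (1 / 8)), ω i) := by
  obtain ⟨T, hT, hT'⟩ := exists_cap ω hdisj hsmall (1 / 8)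
  have h := volume_inside_core ω hcover (Set.Ioc 0 (1 / 8)) T
    (fun x hx => ⟨by linarith [hx.1], by linarith [hx.2]⟩) (by
      intro i x hx hxK z hz hzK
      have h2 : 1 / 8 < z := by
        by_contra h2
        exact hzK ⟨(hsub i hz).1, not_lt.1 h2⟩
      exact hT' i ((hconn i).out hx hz ⟨hxK.2, h2.le⟩) hx)
  rw [Real.volume_Ioc, sub_zero, ofReal_eighth] at h
  exact (ENNReal.add_le_add_iff_right (by finiteness)).1 (h.trans (add_le_add le_rfl hT))

lemma volume_inside_right (ω : ℕ → Set ℝ) (hsub : ∀ i, ω i ⊆ Set.Ioc 0 1)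
    (hconn : ∀ i, (ω i).OrdConnected)
    (hdisj : Pairwise (Function.onFun Disjoint ω)) (hcover : (⋃ i, ω i) = Set.Ioc 0 1)
    (hsmall : ∀ i, volume (ω i) ≤ 1 / 16) :
    1 / 16 ≤ volume (⋃ i ∈ inside ω (Set.Icc (7 / 8) 1), ω i) := by
  obtain ⟨T, hT, hT'⟩ := exists_cap ω hdisj hsmall (7 / 8)
  have h := volume_inside_core ω hcover (Set.Icc (7 / 8) 1) T
    (fun x hx => ⟨by linarith [hx.1], by linarith [hx.2]⟩) (by
      intro i x hx hxK z hz hzK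
      have h2 : z < 7 / 8 := by
        by_contra h2
        exact hzK ⟨not_lt.1 h2, (hsub i hz).2⟩
      exact hT' i ((hconn i).out hz hx ⟨h2.le, hxK.1⟩) hx)
  rw [Real.volume_Icc, show (1 : ℝ) - 7 / 8 = 1 / 8 by norm_num, ofReal_eighth] at h
  exact (ENNReal.add_le_add_iff_right (by finiteness)).1 (h.trans (add_le_add le_rfl hT))

/-- Two disjoint intervals whose images under `Z` are `ε` apart yield the two collections; the
labels are swapped if necessary to order the measures, and the upper bound `15/16` follows from
disjointness. -/
lemma collections_of_separated (ω : ℕ → Set ℝ) (hsub : ∀ i, ω i ⊆ Set.Ioc 0 1)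
    (hconn : ∀ i, (ω i).OrdConnected) (Z : ℝ → ℝ) (ε : ℝ) (K L : Set ℝ)
    (hKL : Disjoint K L)
    (hK : 1 / 16 ≤ volume (⋃ i ∈ inside ω K, ω i))
    (hL : 1 / 16 ≤ volume (⋃ i ∈ inside ω L, ω i))
    (hZ : ∀ x ∈ K ∩ Set.Ioc 0 1, ∀ y ∈ L ∩ Set.Ioc 0 1, ε ≤ |Z x - Z y|) :
    ∃ P₁ P₂ : Set ℕ, Disjoint P₁ P₂ ∧
      (∀ i ∈ P₁, ∀ j ∈ P₂, ∀ θ ∈ ω i, ∀ θ' ∈ ω j, ε ≤ |Z θ - Z θ'|) ∧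
      1 / 16 ≤ volume (⋃ i ∈ P₁, ω i) ∧
      volume (⋃ i ∈ P₁, ω i) ≤ volume (⋃ i ∈ P₂, ω i) ∧
      volume (⋃ i ∈ P₂, ω i) ≤ 15 / 16 := by
  wlog hle : volume (⋃ i ∈ inside ω K, ω i) ≤ volume (⋃ i ∈ inside ω L, ω i) generalizing K L
  · exact this L K hKL.symm hL hK
      (fun x hx y hy => by rw [abs_sub_comm]; exact hZ y hy x hx) (le_of_not_ge hle)
  have hUK : (⋃ i ∈ inside ω K, ω i) ⊆ K := Set.iUnion₂_subset fun i hi => hi.2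
  have hUL : (⋃ i ∈ inside ω L, ω i) ⊆ L := Set.iUnion₂_subset fun i hi => hi.2
  refine ⟨inside ω K, inside ω L, ?_, ?_, hK, hle, ?_⟩
  · rw [Set.disjoint_left]
    rintro i ⟨⟨x, hx⟩, h1⟩ ⟨-, h2⟩
    exact Set.disjoint_left.1 hKL (h1 hx) (h2 hx)
  · intro i hi j hj x hx y hy
    exact hZ x ⟨hi.2 hx, hsub i hx⟩ y ⟨hj.2 hy, hsub j hy⟩
  · have hm : MeasurableSet (⋃ i ∈ inside ω L, ω i) :=
      MeasurableSet.biUnion (Set.to_countable _) fun i _ => (hconn i).measurableSet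
    have h1 := measure_union (μ := volume) (Set.disjoint_of_subset hUK hUL hKL) hm
    have h2 : volume ((⋃ i ∈ inside ω K, ω i) ∪ ⋃ i ∈ inside ω L, ω i) ≤ 1 := by
      refine (measure_mono (t := Set.Ioc (0 : ℝ) 1) ?_).trans (by simp)
      exact Set.union_subset (Set.iUnion₂_subset fun i _ => hsub i)
        (Set.iUnion₂_subset fun i _ => hsub i)
    have h3 : 1 / 16 + volume (⋃ i ∈ inside ω L, ω i) ≤ 1 / 16 + 15 / 16 := by
      refine (add_le_add hK le_rfl).trans ?_
      rw [← h1, ENNReal.div_add_div_same]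
      refine h2.trans (le_of_eq ?_)
      rw [show (1 + 15 : ENNReal) = 16 by norm_num, ENNReal.div_self (by norm_num) (by norm_num)]
    exact (ENNReal.add_le_add_iff_left (by finiteness)).1 h3

lemma sin_peak {x : ℝ} (h1 : 5 / 32 ≤ x) (h2 : x ≤ 11 / 32) :
    4 / 5 ≤ Real.sin (2 * Real.pi * x) := by
  have e : Real.sin (2 * Real.pi * x) = Real.cos (2 * Real.pi * (x - 1 / 4)) := by
    rw [← Real.cos_sub_pi_div_two]; ring_nf
  rw [e]
  have h := Real.one_sub_sq_div_two_le_cos (x := 2 * Real.pi * (x - 1 / 4))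
  have hx : (x - 1 / 4) ^ 2 ≤ (3 / 32) ^ 2 := by nlinarith
  have hpi : Real.pi ^ 2 ≤ 10 := by nlinarith [Real.pi_lt_d2, Real.pi_pos]
  have : Real.pi ^ 2 * (x - 1 / 4) ^ 2 ≤ 10 * (3 / 32) ^ 2 :=
    mul_le_mul hpi hx (sq_nonneg _) (by norm_num)
  nlinarith

lemma sin_add_half (x : ℝ) :
    Real.sin (2 * Real.pi * (x + 1 / 2)) = -Real.sin (2 * Real.pi * x) := by
  rw [← Real.sin_add_pi]; ring_nf

lemma sin_trough {x : ℝ} (h1 : 21 / 32 ≤ x) (h2 : x ≤ 27 / 32) :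
    Real.sin (2 * Real.pi * x) ≤ -(4 / 5) := by
  have := sin_peak (x := x - 1 / 2) (by linarith) (by linarith)
  have h := sin_add_half (x - 1 / 2)
  rw [sub_add_cancel] at h
  linarith

/-- On `[1/8, 3/8]` the sine is at least its value at `1/8`. -/
lemma sin_eighth_le {y : ℝ} (h1 : 1 / 8 ≤ y) (h2 : y ≤ 3 / 8) :
    Real.sin (Real.pi / 4) ≤ Real.sin (2 * Real.pi * y) := by
  have hpi := Real.pi_pos
  rcases le_total y (1 / 4) with h | h
  · exact Real.sin_le_sin_of_le_of_le_pi_div_two (by linarith) (by nlinarith) (by nlinarith)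
  · rw [← Real.sin_pi_sub (2 * Real.pi * y)]
    exact Real.sin_le_sin_of_le_of_le_pi_div_two (by linarith) (by nlinarith) (by nlinarith)

lemma sin_le_eighth {x : ℝ} (h1 : -(1 / 8) ≤ x) (h2 : x ≤ 1 / 8) :
    Real.sin (2 * Real.pi * x) ≤ Real.sin (Real.pi / 4) := by
  have hpi := Real.pi_pos
  exact Real.sin_le_sin_of_le_of_le_pi_div_two (by nlinarith) (by linarith) (by nlinarith)

lemma sin_left {x y : ℝ} (h0 : 0 < x) (h1 : x ≤ 1 / 8) (h2 : 3 / 16 ≤ y) (h3 : y ≤ 3 / 8) :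
    Real.sin (2 * Real.pi * x) ≤ Real.sin (2 * Real.pi * y) :=
  (sin_le_eighth (by linarith) h1).trans (sin_eighth_le (by linarith) h3)

lemma sin_right {x y : ℝ} (h0 : 5 / 8 ≤ x) (h1 : x ≤ 13 / 16) (h2 : 7 / 8 ≤ y) (h3 : y ≤ 1) :
    Real.sin (2 * Real.pi * x) ≤ Real.sin (2 * Real.pi * y) := by
  have a := sin_eighth_le (y := x - 1 / 2) (by linarith) (by linarith)
  have e := sin_add_half (x - 1 / 2)
  rw [sub_add_cancel] at e
  have c := sin_le_eighth (x := 1 - y) (by linarith) (by linarith)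
  have f : Real.sin (2 * Real.pi * (1 - y)) = -Real.sin (2 * Real.pi * y) := by
    rw [← Real.sin_two_pi_sub]; ring_nf
  linarith

/-- The mean value theorem on a subinterval of `(0, 1]`. -/
lemma mvt_unit {V v : ℝ → ℝ}
    (hV : ∀ θ ∈ Set.Ioc (0 : ℝ) 1, HasDerivWithinAt V (v θ) (Set.Ioc 0 1) θ)
    {x y : ℝ} (hx : 0 < x) (hxy : x < y) (hy : y ≤ 1) :
    ∃ c ∈ Set.Ioo x y, V y - V x = v c * (y - x) := by
  have hs : Set.Icc x y ⊆ Set.Ioc 0 1 :=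
    fun z hz => ⟨by linarith [hz.1], by linarith [hz.2]⟩
  obtain ⟨c, hc, h⟩ := exists_hasDerivAt_eq_slope V v hxy
    (fun z hz => ((hV z (hs hz)).continuousWithinAt).mono hs)
    (fun z hz => (hV z (hs (Set.Ioo_subset_Icc_self hz))).hasDerivAt
      (Ioc_mem_nhds (by linarith [hz.1]) (by linarith [hz.2])))
  refine ⟨c, hc, ?_⟩
  rw [h, div_mul_cancel₀ _ (by linarith)]

/-- **Claim (vertical displacement).** For a piecewise linear Markov expanding map
with partition elements of length at most `1/16`, sufficiently small `α` and any
admissible curve `Y`, setting `Z(θ) = a₀ + α sin(2πθ) − Y(θ)²`, there are disjoint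
collections `𝒫₁`, `𝒫₂` of partition elements with `|Z(θ) − Z(θ̃)| ≥ α/100` across
the two collections and `1/16 ≤ Leb(⋃𝒫₁) ≤ Leb(⋃𝒫₂) ≤ 15/16`. -/
theorem vertical_displacement_claim
    (d : ℕ) (hd : 16 ≤ d)
    (ω : ℕ → Set ℝ) (s b : ℕ → ℝ) (g : ℝ → ℝ)
    (hsub : ∀ i, ω i ⊆ Set.Ioc 0 1)
    (hconn : ∀ i, (ω i).OrdConnected)
    (hdisj : Pairwise (Function.onFun Disjoint ω))
    (hcover : (⋃ i, ω i) = Set.Ioc 0 1)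
    (hslope : ∀ i, (ω i).Nonempty → (d : ℝ) ≤ |s i|)
    (haff : ∀ i, ∀ θ ∈ ω i, g θ = s i * θ + b i)
    (hbij : ∀ i, (ω i).Nonempty → Set.BijOn g (ω i) (Set.Ioc 0 1))
    (hsmall : ∀ i, volume (ω i) ≤ 1 / 16)
    (a₀ : ℝ) (ha₀ : a₀ ∈ Set.Ioc (0 : ℝ) 2) :
    ∃ α₀ > 0, ∀ α : ℝ, 0 < α → α < α₀ →
      ∀ Y Y' Y'' : ℝ → ℝ,
        (∀ θ ∈ Set.Ioc (0 : ℝ) 1, Y θ ∈ Set.Icc (-2 : ℝ) 2) →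
        (∀ θ ∈ Set.Ioc (0 : ℝ) 1, HasDerivWithinAt Y (Y' θ) (Set.Ioc 0 1) θ) →
        (∀ θ ∈ Set.Ioc (0 : ℝ) 1, HasDerivWithinAt Y' (Y'' θ) (Set.Ioc 0 1) θ) →
        (∀ θ ∈ Set.Ioc (0 : ℝ) 1, |Y' θ| ≤ α) →
        (∀ θ ∈ Set.Ioc (0 : ℝ) 1, |Y'' θ| ≤ α) →
        ∃ P₁ P₂ : Set ℕ, Disjoint P₁ P₂ ∧
          (∀ i ∈ P₁, ∀ j ∈ P₂, ∀ θ ∈ ω i, ∀ θ' ∈ ω j,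
            α / 100 ≤ |fA a₀ α θ (Y θ) - fA a₀ α θ' (Y θ')|) ∧
          1 / 16 ≤ volume (⋃ i ∈ P₁, ω i) ∧
          volume (⋃ i ∈ P₁, ω i) ≤ volume (⋃ i ∈ P₂, ω i) ∧
          volume (⋃ i ∈ P₂, ω i) ≤ 15 / 16 := by
  refine ⟨1 / 25, by norm_num, ?_⟩
  intro α hα hα1 Y Y' Y'' hY hY1 hY2 hb1 hb2
  have hmid := volume_inside_mid ω hconn hdisj hcover hsmall
  have hV : ∀ θ ∈ Set.Ioc (0 : ℝ) 1,
      HasDerivWithinAt (fun t => Y t ^ 2) (2 * Y θ * Y' θ) (Set.Ioc 0 1) θ := by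
    intro θ hθ
    have h := (hY1 θ hθ).fun_pow 2
    simpa using h
  have hv : ∀ θ ∈ Set.Ioc (0 : ℝ) 1,
      HasDerivWithinAt (fun t => 2 * Y t * Y' t)
        (2 * Y' θ * Y' θ + 2 * Y θ * Y'' θ) (Set.Ioc 0 1) θ :=
    fun θ hθ => ((hY1 θ hθ).const_mul 2).mul (hY2 θ hθ)
  have hvb : ∀ θ ∈ Set.Ioc (0 : ℝ) 1,
      ‖2 * Y' θ * Y' θ + 2 * Y θ * Y'' θ‖ ≤ 4 * α + 2 * α ^ 2 := by
    intro θ hθ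
    have h1 : |Y' θ * Y' θ| ≤ α * α := by
      rw [abs_mul]
      exact mul_le_mul (hb1 θ hθ) (hb1 θ hθ) (abs_nonneg _) hα.le
    have h2 : |Y θ * Y'' θ| ≤ 2 * α := by
      rw [abs_mul]
      exact mul_le_mul (abs_le.2 (hY θ hθ)) (hb2 θ hθ) (abs_nonneg _) (by norm_num)
    rw [Real.norm_eq_abs, abs_le]
    rw [abs_le] at h1 h2
    constructor <;> nlinarith [h1.1, h1.2, h2.1, h2.2]
  have hlip : ∀ θ ∈ Set.Ioc (0 : ℝ) 1, ∀ t ∈ Set.Ioc (0 : ℝ) 1,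
      |2 * Y θ * Y' θ - 2 * Y t * Y' t| ≤ (4 * α + 2 * α ^ 2) * |θ - t| :=
    fun θ hθ t ht =>
      (convex_Ioc (0 : ℝ) 1).norm_image_sub_le_of_norm_hasDerivWithin_le hv hvb ht hθ
  by_cases hcase : ∀ θ ∈ Set.Icc (5 / 32 : ℝ) (27 / 32), -(9 / 4) * α ≤ 2 * Y θ * Y' θ
  · refine collections_of_separated ω hsub hconn (fun θ => fA a₀ α θ (Y θ)) (α / 100)
      (Set.Icc (5 / 32) (11 / 32)) (Set.Icc (21 / 32) (27 / 32)) ?_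
      (hmid _ _ (by norm_num) (by norm_num) (by norm_num))
      (hmid _ _ (by norm_num) (by norm_num) (by norm_num)) ?_
    · rw [Set.disjoint_left]
      intro x hx hy
      linarith [hx.2, hy.1]
    · rintro x ⟨⟨hx1, hx2⟩, hx⟩ y ⟨⟨hy1, hy2⟩, hy⟩
      obtain ⟨c, hc, h⟩ := mvt_unit hV hx.1 (show x < y by linarith) hy.2
      have hs1 := mul_le_mul_of_nonneg_left (sin_peak hx1 hx2) hα.le
      have hs2 := mul_le_mul_of_nonneg_left (sin_trough hy1 hy2) hα.le
      have h1 := mul_le_mul_of_nonneg_right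
        (hcase c ⟨by linarith [hc.1], by linarith [hc.2]⟩) (show 0 ≤ y - x by linarith)
      have h2 : α * (y - x) ≤ α * (11 / 16) :=
        mul_le_mul_of_nonneg_left (by linarith) hα.le
      refine le_trans ?_ (le_abs_self _)
      simp only [fA] at h ⊢
      nlinarith
  · push Not at hcase
    obtain ⟨t, ⟨ht1, ht2⟩, ht⟩ := hcase
    have hneg : ∀ θ ∈ Set.Ioc (0 : ℝ) 1, |θ - t| ≤ 1 / 2 → 2 * Y θ * Y' θ ≤ -(1 / 5) * α := by
      intro θ hθ hd'
      have h1 := (le_abs_self _).trans (hlip θ hθ t ⟨by linarith, by linarith⟩)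
      have h2 : (4 * α + 2 * α ^ 2) * |θ - t| ≤ (4 * α + 2 * α ^ 2) * (1 / 2) :=
        mul_le_mul_of_nonneg_left hd' (by positivity)
      nlinarith
    -- A steady decrease of `Y²` over a gap of `1/16` makes `Z` rise by `α / 80`.
    have hsep : ∀ x y : ℝ, 0 < x → y ≤ 1 → 1 / 16 ≤ y - x →
        (∀ c ∈ Set.Ioo x y, |c - t| ≤ 1 / 2) →
        Real.sin (2 * Real.pi * x) ≤ Real.sin (2 * Real.pi * y) →
        α / 100 ≤ |fA a₀ α x (Y x) - fA a₀ α y (Y y)| := by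
      intro x y hx hy hxy hc' hsin
      obtain ⟨c, hc, h⟩ := mvt_unit hV hx (show x < y by linarith) hy
      have h1 := mul_le_mul_of_nonneg_right
        (hneg c ⟨by linarith [hc.1], by linarith [hc.2]⟩ (hc' c hc)) (show 0 ≤ y - x by linarith)
      have h2 : α * (1 / 16) ≤ α * (y - x) := mul_le_mul_of_nonneg_left hxy hα.le
      have h3 := mul_le_mul_of_nonneg_left hsin hα.le
      rw [abs_sub_comm]
      refine le_trans ?_ (le_abs_self _)
      simp only [fA] at h ⊢
      nlinarith
    rcases le_total t (1 / 2) with htt | htt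
    · refine collections_of_separated ω hsub hconn (fun θ => fA a₀ α θ (Y θ)) (α / 100)
        (Set.Ioc 0 (1 / 8)) (Set.Icc (3 / 16) (3 / 8)) ?_
        (volume_inside_left ω hsub hconn hdisj hcover hsmall)
        (hmid _ _ (by norm_num) (by norm_num) (by norm_num)) ?_
      · rw [Set.disjoint_left]
        intro x hx hy
        linarith [hx.2, hy.1]
      · rintro x ⟨⟨hx1, hx2⟩, hx⟩ y ⟨⟨hy1, hy2⟩, hy⟩
        refine hsep x y hx1 hy.2 (by linarith) (fun c hc => ?_) (sin_left hx1 hx2 hy1 hy2)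
        rw [abs_le]
        constructor <;> linarith [hc.1, hc.2]
    · refine collections_of_separated ω hsub hconn (fun θ => fA a₀ α θ (Y θ)) (α / 100)
        (Set.Icc (5 / 8) (13 / 16)) (Set.Icc (7 / 8) 1) ?_
        (hmid _ _ (by norm_num) (by norm_num) (by norm_num))
        (volume_inside_right ω hsub hconn hdisj hcover hsmall) ?_
      · rw [Set.disjoint_left]
        intro x hx hy
        linarith [hx.2, hy.1]
      · rintro x ⟨⟨hx1, hx2⟩, hx⟩ y ⟨⟨hy1, hy2⟩, hy⟩
        refine hsep x y hx.1 hy2 (by linarith) (fun c hc => ?_) (sin_right hx1 hx2 hy1 hy2)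
        rw [abs_le]
        constructor <;> linarith [hc.1, hc.2]
end

section
/- Let I ⊆ ℝ be an interval, U ⊆ I, N ≥ 1 an integer, 0 < λ < 1 and D ≥ 1. Let (f_k)_{k≥1} be differentiable maps from I to I with |f_k'(y)| ≤ D for all y ∈ I and all k. Assume that for every m ≥ 0 the block composition F_m = f_{(m+1)N} ∘ ⋯ ∘ f_{mN+1} maps U into U and satisfies |F_m'(y)| ≤ λ^N for all y ∈ U. Then for every y ∈ U and every n ≥ 1, |(f_n ∘ ⋯ ∘ f_1)'(y)| ≤ D^N λ^{−N} λ^n; in particular, limsup_{n→∞} (1/n) log |(f_n ∘ ⋯ ∘ f_1)'(y)| ≤ log λ < 0 for every y ∈ U. -/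
/-!
Split the first `n = m N + r` maps (`r < N`) into `m` full blocks followed by a remainder of
length `r`. By the chain rule (`chainProd_add`) the derivative product factors accordingly. The
blocks preserve `U`, so each of them contributes a factor at most `λᴺ`
(`abs_chainProd_blocks_le`), while the remainder contributes at most `Dʳ ≤ Dᴺ`
(`abs_chainProd_le_pow`). Since `λ^(mN) = λⁿ / λʳ ≤ λⁿ / λᴺ`, the estimate follows, and its
`n`-th root `(Dᴺ / λᴺ)^(1/n) λ` tends to `λ`, which bounds the limsup.
-/

open Filter Set

/-- The composition `f_{s+n} ∘ ⋯ ∘ f_{s+1}` (the empty composition is the identity). -/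
def compFrom (f : ℕ → ℝ → ℝ) (s : ℕ) : ℕ → ℝ → ℝ
  | 0, y => y
  | n + 1, y => f (s + n + 1) (compFrom f s n y)

/-- The chain-rule derivative product
`∏_{i=1}^{n} f'_{s+i}(f_{s+i−1} ∘ ⋯ ∘ f_{s+1}(y))` of the composition
`f_{s+n} ∘ ⋯ ∘ f_{s+1}` at `y`. -/
noncomputable def chainProd (f f' : ℕ → ℝ → ℝ) (s n : ℕ) (y : ℝ) : ℝ :=
  ∏ i ∈ Finset.range n, f' (s + i + 1) (compFrom f s i y)

/-- Cocycle identity: the composition of `a + b` maps runs the first `a`, then the next `b`. -/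
theorem compFrom_add (f : ℕ → ℝ → ℝ) (s a b : ℕ) (y : ℝ) :
    compFrom f s (a + b) y = compFrom f (s + a) b (compFrom f s a y) := by
  induction b with
  | zero => rfl
  | succ b ih =>
    rw [← Nat.add_assoc]
    simp only [compFrom]
    rw [ih, Nat.add_assoc s a b]

/-- The chain rule for derivative products along an orbit. -/
theorem chainProd_add (f f' : ℕ → ℝ → ℝ) (s a b : ℕ) (y : ℝ) :
    chainProd f f' s (a + b) y =
      chainProd f f' s a y * chainProd f f' (s + a) b (compFrom f s a y) := by
  unfold chainProd
  rw [Finset.prod_range_add]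
  congr 1
  refine Finset.prod_congr rfl fun i _ => ?_
  rw [compFrom_add, Nat.add_assoc s a i]

theorem compFrom_mem {I : Set ℝ} {f : ℕ → ℝ → ℝ}
    (hmaps : ∀ k : ℕ, 1 ≤ k → Set.MapsTo (f k) I I) (s n : ℕ) {y : ℝ} (hy : y ∈ I) :
    compFrom f s n y ∈ I := by
  induction n with
  | zero => exact hy
  | succ n ih => exact hmaps _ (Nat.le_add_left 1 _) ih

theorem abs_chainProd_le_pow {I : Set ℝ} {D : ℝ} {f f' : ℕ → ℝ → ℝ}
    (hmaps : ∀ k : ℕ, 1 ≤ k → Set.MapsTo (f k) I I)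
    (hDbound : ∀ k : ℕ, 1 ≤ k → ∀ y ∈ I, |f' k y| ≤ D) (s n : ℕ) {y : ℝ} (hy : y ∈ I) :
    |chainProd f f' s n y| ≤ D ^ n := by
  unfold chainProd
  rw [Finset.abs_prod]
  calc _ ≤ ∏ _i ∈ Finset.range n, D :=
        Finset.prod_le_prod (fun _ _ => abs_nonneg _) fun i _ =>
          hDbound _ (Nat.le_add_left 1 _) _ (compFrom_mem hmaps s i hy)
    _ = D ^ n := by simp

theorem compFrom_blocks_mem {U : Set ℝ} {N : ℕ} {f : ℕ → ℝ → ℝ}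
    (hblockmap : ∀ m : ℕ, Set.MapsTo (compFrom f (m * N) N) U U) (m : ℕ) {y : ℝ} (hy : y ∈ U) :
    compFrom f 0 (m * N) y ∈ U := by
  induction m with
  | zero => simpa [compFrom] using hy
  | succ m ih =>
    rw [Nat.succ_mul, compFrom_add, Nat.zero_add]
    exact hblockmap m ih

theorem abs_chainProd_blocks_le {U : Set ℝ} {N : ℕ} {lam : ℝ} {f f' : ℕ → ℝ → ℝ}
    (hlam0 : 0 < lam)
    (hblockmap : ∀ m : ℕ, Set.MapsTo (compFrom f (m * N) N) U U)
    (hblockder : ∀ m : ℕ, ∀ y ∈ U, |chainProd f f' (m * N) N y| ≤ lam ^ N)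
    (m : ℕ) {y : ℝ} (hy : y ∈ U) :
    |chainProd f f' 0 (m * N) y| ≤ lam ^ (m * N) := by
  induction m with
  | zero => simp [chainProd]
  | succ m ih =>
    rw [Nat.succ_mul, chainProd_add, Nat.zero_add, abs_mul, pow_add]
    exact mul_le_mul ih (hblockder m _ (compFrom_blocks_mem hblockmap m hy))
      (abs_nonneg _) (by positivity)

/-- A geometric bound `C λⁿ` on a sequence bounds its `n`-th root growth rate by `λ`. -/
theorem limsup_rpow_inv_le {a : ℕ → ℝ} {C lam : ℝ} (ha : ∀ n, 0 ≤ a n) (hC : 0 < C)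
    (hlam0 : 0 < lam) (h : ∀ n : ℕ, 1 ≤ n → a n ≤ C * lam ^ n) :
    Filter.limsup (fun n : ℕ => a n ^ ((n : ℝ)⁻¹)) Filter.atTop ≤ lam := by
  have hlim : Tendsto (fun n : ℕ => C ^ ((n : ℝ)⁻¹) * lam) atTop (nhds lam) := by
    have h0 : Tendsto (fun n : ℕ => ((n : ℝ)⁻¹)) atTop (nhds 0) :=
      tendsto_inv_atTop_nhds_zero_nat
    simpa using (tendsto_const_nhds.rpow h0 (Or.inl hC.ne')).mul_const lam
  rw [← hlim.limsup_eq]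
  refine Filter.limsup_le_limsup ?_ ?_ hlim.isBoundedUnder_le
  · filter_upwards [eventually_ge_atTop 1] with n hn
    calc a n ^ ((n : ℝ)⁻¹) ≤ (C * lam ^ n) ^ ((n : ℝ)⁻¹) :=
          Real.rpow_le_rpow (ha n) (h n hn) (by positivity)
      _ = C ^ ((n : ℝ)⁻¹) * lam := by
          rw [Real.mul_rpow hC.le (by positivity),
            Real.pow_rpow_inv_natCast hlam0.le (Nat.one_le_iff_ne_zero.mp hn)]
  · -- Coboundedness in the real line: the sequence is bounded below by `0`.
    exact Filter.IsBoundedUnder.isCoboundedUnder_le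
      (Filter.isBoundedUnder_of ⟨0, fun n => Real.rpow_nonneg (ha n) _⟩)

/-- **Fiberwise contraction estimate.** If each `f_k : I → I` is differentiable with
`|f_k'| ≤ D`, and each block `F_m = f_{(m+1)N} ∘ ⋯ ∘ f_{mN+1}` maps `U ⊆ I` into `U`
with `|F_m'| ≤ λᴺ` on `U` (`0 < λ < 1`), then for every `y ∈ U` and `n ≥ 1` the
chain-rule derivative satisfies `|(f_n ∘ ⋯ ∘ f_1)'(y)| ≤ Dᴺ λ⁻ᴺ λⁿ`; in particular
the exponential growth rate `limsup |(f_n ∘ ⋯ ∘ f_1)'(y)|^{1/n}` is at most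
`λ < 1` (equivalently, `limsup (1/n) log |(f_n ∘ ⋯ ∘ f_1)'(y)| ≤ log λ < 0`). -/
theorem fiberwise_contraction
    (I U : Set ℝ) (hU : U ⊆ I) (N : ℕ) (hN : 1 ≤ N)
    (lam D : ℝ) (hlam0 : 0 < lam) (hlam1 : lam < 1) (hD : 1 ≤ D)
    (f f' : ℕ → ℝ → ℝ)
    (hmaps : ∀ k : ℕ, 1 ≤ k → Set.MapsTo (f k) I I)
    (hder : ∀ k : ℕ, 1 ≤ k → ∀ y ∈ I, HasDerivWithinAt (f k) (f' k y) I y)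
    (hDbound : ∀ k : ℕ, 1 ≤ k → ∀ y ∈ I, |f' k y| ≤ D)
    (hblockmap : ∀ m : ℕ, Set.MapsTo (compFrom f (m * N) N) U U)
    (hblockder : ∀ m : ℕ, ∀ y ∈ U, |chainProd f f' (m * N) N y| ≤ lam ^ N) :
    ∀ y ∈ U,
      (∀ n : ℕ, 1 ≤ n →
        |chainProd f f' 0 n y| ≤ D ^ N * lam ^ n / lam ^ N) ∧
      Filter.limsup (fun n : ℕ => |chainProd f f' 0 n y| ^ ((n : ℝ)⁻¹))
          Filter.atTop ≤ lam ∧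
      Real.log lam < 0 := by
  intro y hy
  have hbound : ∀ n : ℕ, |chainProd f f' 0 n y| ≤ D ^ N * lam ^ n / lam ^ N := by
    intro n
    obtain ⟨m, r, hr, rfl⟩ : ∃ m r : ℕ, r < N ∧ n = m * N + r :=
      ⟨n / N, n % N, Nat.mod_lt n hN, (Nat.div_add_mod' n N).symm⟩
    have hrest : |chainProd f f' (m * N) r (compFrom f 0 (m * N) y)| ≤ D ^ N :=
      (abs_chainProd_le_pow hmaps hDbound _ r (hU (compFrom_blocks_mem hblockmap m hy))).trans
        (pow_le_pow_right₀ hD hr.le)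
    have hblocks := abs_chainProd_blocks_le hlam0 hblockmap hblockder m hy
    have hpow : lam ^ N ≤ lam ^ r := pow_le_pow_of_le_one hlam0.le hlam1.le hr.le
    rw [chainProd_add, Nat.zero_add, abs_mul, le_div_iff₀ (by positivity), pow_add]
    calc _ ≤ lam ^ (m * N) * D ^ N * lam ^ r := by gcongr
      _ = D ^ N * (lam ^ (m * N) * lam ^ r) := by ring
  refine ⟨fun n _ => hbound n, ?_, Real.log_neg hlam0 hlam1⟩
  have hD0 : 0 < D := by linarith
  refine limsup_rpow_inv_le (C := D ^ N / lam ^ N) (fun n => abs_nonneg _) (by positivity) hlam0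
    fun n _ => (hbound n).trans_eq (by ring)
end
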